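/- arXiv:2508.19211 — 5 statements merged into one kernel-verified Lean document; each statement's English description precedes it below -/
import Mathlib

section
/- Let ℓ be a prime with ℓ odd or ζ_4 ∈ K, and ℓ ≠ char(K). Let t ≥ 1 be the largest integer such that ζ_{ℓ^t} ∈ K(ζ_{2𝒫}) (or t = ∞ if no largest such integer exists). If ζ_ℓ ∉ K, then K(ζ_{2𝒫}) ∩ √[ℓ^∞]{K^×} = ⟨ζ_{ℓ^t}, K^×⟩ (as subgroups of K̄^×) and K(ζ_{2𝒫}) ∩ K(√[ℓ^∞]{K^×}) = K(ζ_{ℓ^t}) (as subfields of K̄). -/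
noncomputable section

open IntermediateField

/-- `K^×` viewed as a subgroup of the units of the algebraic closure of `K`. -/
def baseUnits (K : Type*) [Field K] : Subgroup (AlgebraicClosure K)ˣ :=
  (Units.map (algebraMap K (AlgebraicClosure K)).toMonoidHom).range

/-- The subgroup of `(AlgebraicClosure K)ˣ` of elements whose `m`-th power lies in `K^×`. -/
def radGroup (K : Type*) [Field K] (m : ℕ) : Subgroup (AlgebraicClosure K)ˣ where
  carrier := {x | ∃ y : K, algebraMap K (AlgebraicClosure K) y = (x : AlgebraicClosure K) ^ m}
  one_mem' := ⟨1, by simp⟩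
  mul_mem' := by
    rintro a b ⟨y, hy⟩ ⟨z, hz⟩
    exact ⟨y * z, by rw [map_mul, hy, hz, Units.val_mul, mul_pow]⟩
  inv_mem' := by
    rintro a ⟨y, hy⟩
    refine ⟨y⁻¹, ?_⟩
    rw [map_inv₀, hy, Units.val_inv_eq_inv_val, inv_pow]

lemma radGroup_le (K : Type*) [Field K] {m k : ℕ} :
    radGroup K m ≤ radGroup K (m * k) := by
  rintro x ⟨y, hy⟩
  exact ⟨y ^ k, by rw [map_pow, hy, ← pow_mul]⟩

/-- The group `√[ℓ^∞]{K^×}` of radicals of `ℓ`-power order over `K`. -/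
def radInf (K : Type*) [Field K] (ℓ : ℕ) : Subgroup (AlgebraicClosure K)ˣ where
  carrier := {x | ∃ n : ℕ, x ∈ radGroup K (ℓ ^ n)}
  one_mem' := ⟨0, one_mem _⟩
  mul_mem' := by
    rintro a b ⟨n, ha⟩ ⟨m, hb⟩
    refine ⟨n + m, mul_mem ?_ ?_⟩
    · have h : radGroup K (ℓ ^ n) ≤ radGroup K (ℓ ^ (n + m)) := by
        rw [pow_add]; exact radGroup_le K
      exact h ha
    · have h : radGroup K (ℓ ^ m) ≤ radGroup K (ℓ ^ (n + m)) := by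
        rw [add_comm, pow_add]; exact radGroup_le K
      exact h hb
  inv_mem' := by
    rintro a ⟨n, ha⟩
    exact ⟨n, inv_mem ha⟩

/-- The units of the algebraic closure lying in an intermediate field `F`, as a subgroup. -/
def unitsIn {K : Type*} [Field K] (F : IntermediateField K (AlgebraicClosure K)) :
    Subgroup (AlgebraicClosure K)ˣ where
  carrier := {x | (x : AlgebraicClosure K) ∈ F}
  one_mem' := by
    show ((1 : (AlgebraicClosure K)ˣ) : AlgebraicClosure K) ∈ F
    simpa using one_mem F
  mul_mem' := by
    intro a b ha hb
    show ((a * b : (AlgebraicClosure K)ˣ) : AlgebraicClosure K) ∈ F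
    rw [Units.val_mul]
    exact mul_mem ha hb
  inv_mem' := by
    intro x hx
    show ((x⁻¹ : (AlgebraicClosure K)ˣ) : AlgebraicClosure K) ∈ F
    rw [Units.val_inv_eq_inv_val]
    exact inv_mem hx

/-- `K(ζ_{2𝒫})`: the extension of `K` generated by all roots of unity whose order is `4` or
an odd prime, and not divisible by the characteristic of `K`. -/
def cyclo2P (K : Type*) [Field K] : IntermediateField K (AlgebraicClosure K) :=
  IntermediateField.adjoin K
    {x : AlgebraicClosure K |
      ∃ n : ℕ, (n = 4 ∨ (n.Prime ∧ Odd n)) ∧ ¬ (ringChar K ∣ n) ∧ IsPrimitiveRoot x n}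

/-- The set of roots of unity of order exactly `n` in the algebraic closure of `K`. -/
def primRoots (K : Type*) [Field K] (n : ℕ) : Set (AlgebraicClosure K) :=
  {x | IsPrimitiveRoot x n}

/-- The set of roots of unity of order `ℓ^n` for `n ≤ t` (all of them if `t = ∞`). -/
def pPowRoots (K : Type*) [Field K] (ℓ : ℕ) (t : ℕ∞) : Set (AlgebraicClosure K) :=
  {x | ∃ n : ℕ, (n : ℕ∞) ≤ t ∧ IsPrimitiveRoot x (ℓ ^ n)}

/-- The set of units that are roots of unity of order `ℓ^n` for `n ≤ t`. -/
def pPowRootsUnits (K : Type*) [Field K] (ℓ : ℕ) (t : ℕ∞) : Set (AlgebraicClosure K)ˣ :=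
  {x | ∃ n : ℕ, (n : ℕ∞) ≤ t ∧ IsPrimitiveRoot (x : AlgebraicClosure K) (ℓ ^ n)}


section helpers

lemma aux_inv {ℓ u n : ℕ} (hℓ : ℓ.Prime) (hu : ¬ ((ℓ : ℤ) ∣ (u : ℤ) - 1)) :
    ∃ v : ℕ, ((ℓ ^ n : ℕ) : ℤ) ∣ ((u : ℤ) - 1) * v - 1 := by
  have hp : Prime (ℓ : ℤ) := Nat.prime_iff_prime_int.mp hℓ
  have hc : IsCoprime ((u : ℤ) - 1) ((ℓ ^ n : ℕ) : ℤ) := by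
    push_cast
    exact IsCoprime.pow_right ((hp.coprime_iff_not_dvd.2 hu).symm)
  obtain ⟨a, b, hab⟩ := hc
  have hpos : ((ℓ ^ n : ℕ) : ℤ) ≠ 0 := by
    exact_mod_cast (pow_pos hℓ.pos n).ne'
  refine ⟨(a % ((ℓ ^ n : ℕ) : ℤ)).toNat, ?_⟩
  rw [Int.toNat_of_nonneg (Int.emod_nonneg _ hpos)]
  refine ⟨-b - (u - 1) * (a / ((ℓ ^ n : ℕ) : ℤ)), ?_⟩
  have := Int.emod_add_mul_ediv a ((ℓ ^ n : ℕ) : ℤ)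
  generalize ((ℓ ^ n : ℕ) : ℤ) = q at *
  generalize a / q = d at *
  generalize a % q = r at *
  subst this
  linear_combination hab

lemma aux_pow {ℓ t : ℕ} (hℓ : ℓ.Prime) (hodd : Odd ℓ) (ht : 1 ≤ t) {u v : ℤ}
    (hu : (ℓ : ℤ) ^ t ∣ u - 1) (hu' : ¬ (ℓ : ℤ) ^ (t + 1) ∣ u - 1) (hv : (ℓ : ℤ) ^ t ∣ v - 1)
    (m : ℕ) : ∃ k : ℕ, (ℓ : ℤ) ^ (t + m) ∣ u ^ k - v := by
  have hp : Prime (ℓ : ℤ) := Nat.prime_iff_prime_int.mp hℓ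
  have hnot : ∀ w : ℤ, (ℓ : ℤ) ^ t ∣ w - 1 → ¬ (ℓ : ℤ) ∣ w := by
    intro w hw h
    have h1 : (ℓ : ℤ) ∣ w - 1 := (dvd_pow_self _ (by omega)).trans hw
    have : (ℓ : ℤ) ∣ 1 := by simpa using dvd_sub h h1
    exact hp.not_unit (isUnit_of_dvd_one this)
  induction m with
  | zero => exact ⟨0, by simpa using (dvd_neg.2 hv)⟩
  | succ m ih =>
    obtain ⟨k, w, hk⟩ := ih
    have hm : emultiplicity (ℓ : ℤ) (u ^ (ℓ ^ m) - 1 ^ (ℓ ^ m)) = ((t + m : ℕ) : ℕ∞) := by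
      rw [Int.emultiplicity_pow_sub_pow hℓ hodd ((dvd_pow_self _ (by omega)).trans hu)
        (hnot u hu), hℓ.emultiplicity_pow_self, emultiplicity_eq_coe.2 ⟨hu, hu'⟩]
      push_cast; rfl
    rw [emultiplicity_eq_coe] at hm
    obtain ⟨⟨s, hs⟩, h2⟩ := hm
    rw [one_pow] at hs h2
    have hs' : ¬ (ℓ : ℤ) ∣ s := by
      rintro ⟨r, rfl⟩
      exact h2 ⟨r, by rw [hs]; ring⟩
    have hvs : IsCoprime (ℓ : ℤ) (v * s) := by
      rw [hp.coprime_iff_not_dvd]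
      intro h
      rcases hp.dvd_or_dvd h with h | h
      · exact hnot v hv h
      · exact hs' h
    obtain ⟨a, b, hab⟩ := hvs
    -- choose j = -w * b mod ℓ
    set j : ℕ := ((-w * b) % (ℓ : ℤ)).toNat with hj
    have hl0 : (ℓ : ℤ) ≠ 0 := hp.ne_zero
    have hjz : (j : ℤ) = (-w * b) % (ℓ : ℤ) := Int.toNat_of_nonneg (Int.emod_nonneg _ hl0)
    have hj2 : (ℓ : ℤ) ∣ w + v * s * j := by
      have h1 : (ℓ : ℤ) ∣ (j : ℤ) - (-w * b) := by
        rw [hjz]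
        have := Int.emod_add_mul_ediv (-w * b) (ℓ : ℤ)
        exact ⟨-((-w * b) / (ℓ : ℤ)), by linear_combination this⟩
      obtain ⟨r, hr⟩ := h1
      exact ⟨w * a + v * s * r, by linear_combination (-w) * hab + v * s * hr⟩
    obtain ⟨r, hr⟩ := hj2
    refine ⟨k + ℓ ^ m * j, ?_⟩
    have hus : u ^ (ℓ ^ m) = 1 + (ℓ : ℤ) ^ (t + m) * s := by linear_combination hs
    have hbin : ∀ j : ℕ, ∃ e : ℤ, (u ^ (ℓ ^ m)) ^ j =
        1 + (ℓ : ℤ) ^ (t + m) * s * j + (ℓ : ℤ) ^ (t + m + 1) * e := by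
      intro j
      induction j with
      | zero => exact ⟨0, by simp⟩
      | succ j ih =>
        obtain ⟨e, he⟩ := ih
        obtain ⟨d, hd⟩ : ∃ d, t = d + 1 := ⟨t - 1, by omega⟩
        refine ⟨e + (ℓ : ℤ) ^ (t + m) * e * s + (ℓ : ℤ) ^ (d + m) * s * s * j, ?_⟩
        rw [pow_succ, he, hus, hd]
        push_cast
        ring
    obtain ⟨e, he⟩ := hbin j
    have hk' : u ^ k = v + (ℓ : ℤ) ^ (t + m) * w := by linear_combination hk
    obtain ⟨d, hd⟩ : ∃ d, t = d + 1 := ⟨t - 1, by omega⟩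
    refine ⟨r + v * e + (ℓ : ℤ) ^ (d + m) * w * s * j + (ℓ : ℤ) ^ (t + m) * w * e, ?_⟩
    rw [pow_add, pow_mul, he, hk']
    have : (ℓ : ℤ) ^ (t + (m + 1)) * r = (ℓ : ℤ) ^ (t + m) * (w + v * s * j) := by
      rw [hr]; ring
    subst hd
    linear_combination -this

variable {K : Type*} [Field K]

lemma aux_fix (F : IntermediateField K (AlgebraicClosure K)) (z : AlgebraicClosure K)
    (hz : IsSeparable K z)
    (h : ∀ g : AlgebraicClosure K ≃ₐ[K] AlgebraicClosure K, (∀ x ∈ F, g x = x) → g z = z) :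
    z ∈ F := by
  by_contra hzF
  have hz' : IsSeparable F z := hz.tower_top F
  have h1 : z ∉ (⊥ : Subalgebra F (AlgebraicClosure K)) := by
    rintro ⟨y, rfl⟩
    exact hzF y.2
  rw [notMem_iff_exists_ne_and_isConjRoot hz' (IsAlgClosed.splits _)] at h1
  obtain ⟨y, hne, hy⟩ := h1
  rw [isConjRoot_iff_exists_algEquiv] at hy
  obtain ⟨g, hg⟩ := hy
  have hzy := h (g.symm.restrictScalars K) (fun x hx => g.symm.commutes ⟨x, hx⟩)
  apply hne
  change g.symm z = z at hzy
  exact hzy.symm.trans (by rw [← hg]; simp)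

lemma aux_root_sep {n : ℕ} (hn : (n : K) ≠ 0) {x : AlgebraicClosure K} {y : K} (hy : y ≠ 0)
    (hx : x ^ n = algebraMap K _ y) : IsSeparable K x := by
  have h : (Polynomial.X ^ n - Polynomial.C y).Separable :=
    Polynomial.separable_X_pow_sub_C y hn hy
  refine h.of_dvd (minpoly.dvd _ _ ?_)
  simp [hx]

lemma aux_char {n : ℕ} (h : ¬ ringChar K ∣ n) : (n : K) ≠ 0 := by
  rwa [Ne, ringChar.spec]

lemma aux_cyclo_sep {z : AlgebraicClosure K} (hz : z ∈ cyclo2P K) : IsSeparable K z := by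
  have : cyclo2P K ≤ separableClosure K (AlgebraicClosure K) := by
    refine IntermediateField.adjoin_le_iff.2 ?_
    rintro x ⟨n, -, hc, hx⟩
    rw [SetLike.mem_coe, mem_separableClosure_iff]
    exact aux_root_sep (aux_char hc) one_ne_zero (by rw [hx.pow_eq_one, map_one])
  exact mem_separableClosure_iff.1 (this hz)

lemma aux_act {n : ℕ} (hn : n ≠ 0) {x : AlgebraicClosure K} (hx : IsPrimitiveRoot x n)
    (g : AlgebraicClosure K ≃ₐ[K] AlgebraicClosure K) :
    ∃ u : ℕ, ∀ w : AlgebraicClosure K, w ^ n = 1 → g w = w ^ u := by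
  haveI : NeZero n := ⟨hn⟩
  obtain ⟨u, -, hu⟩ := hx.eq_pow_of_pow_eq_one (ξ := g x)
    (by rw [← map_pow, hx.pow_eq_one, map_one])
  refine ⟨u, fun w hw => ?_⟩
  obtain ⟨i, -, rfl⟩ := hx.eq_pow_of_pow_eq_one hw
  rw [map_pow, ← hu, ← pow_mul, ← pow_mul, mul_comm]

lemma aux_ne {n : ℕ} (h : (n = 4 ∨ (n.Prime ∧ Odd n))) : n ≠ 0 := by
  rcases h with rfl | ⟨h, -⟩
  · norm_num
  · exact h.ne_zero

lemma aux_normal (g : AlgebraicClosure K ≃ₐ[K] AlgebraicClosure K) {z : AlgebraicClosure K}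
    (hz : z ∈ cyclo2P K) : g z ∈ cyclo2P K := by
  have : cyclo2P K ≤ (cyclo2P K).comap g.toAlgHom := by
    refine IntermediateField.adjoin_le_iff.2 ?_
    rintro x ⟨n, h, hc, hx⟩
    refine IntermediateField.subset_adjoin _ _ ⟨n, h, hc, ?_⟩
    exact hx.map_of_injective g.injective
  exact this hz

lemma aux_eq_on (S : Set (AlgebraicClosure K))
    (g h : AlgebraicClosure K ≃ₐ[K] AlgebraicClosure K) (H : ∀ x ∈ S, g x = h x)
    {z : AlgebraicClosure K} (hz : z ∈ IntermediateField.adjoin K S) : g z = h z := by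
  induction hz using IntermediateField.adjoin_induction with
  | mem x hx => exact H x hx
  | algebraMap x => simp
  | add x y _ _ hx hy => simp [hx, hy]
  | inv x _ hx => simp [hx]
  | mul x y _ _ hx hy => simp [hx, hy]

lemma aux_comm (g h : AlgebraicClosure K ≃ₐ[K] AlgebraicClosure K) {z : AlgebraicClosure K}
    (hz : z ∈ cyclo2P K) : g (h z) = h (g z) := by
  refine aux_eq_on _ (g * h) (h * g) ?_ hz
  rintro x ⟨n, hn, hc, hx⟩
  obtain ⟨a, ha⟩ := aux_act (aux_ne hn) hx g
  obtain ⟨b, hb⟩ := aux_act (aux_ne hn) hx h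
  have hx1 := hx.pow_eq_one
  rw [AlgEquiv.mul_apply, AlgEquiv.mul_apply, ha x hx1, hb x hx1, map_pow, map_pow,
    ha x hx1, hb x hx1, ← pow_mul, ← pow_mul, mul_comm]

lemma aux_pow_eq_iff {ζ : AlgebraicClosure K} {n : ℕ} (hn : n ≠ 0) (hζ : IsPrimitiveRoot ζ n)
    (a b : ℕ) : ζ ^ a = ζ ^ b ↔ (n : ℤ) ∣ (a : ℤ) - b := by
  rw [← hζ.zpow_eq_one_iff_dvd, zpow_sub₀ (hζ.ne_zero hn), zpow_natCast, zpow_natCast,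
    div_eq_one_iff_eq (pow_ne_zero _ (hζ.ne_zero hn))]

lemma aux_fix_iff {ℓ : ℕ} (hℓ : ℓ.Prime) {ζ : AlgebraicClosure K} {n m u : ℕ} (hm : m ≤ n)
    (hζ : IsPrimitiveRoot ζ (ℓ ^ n)) :
    (ζ ^ (ℓ ^ (n - m))) ^ u = ζ ^ (ℓ ^ (n - m)) ↔ (ℓ : ℤ) ^ m ∣ (u : ℤ) - 1 := by
  rw [← pow_mul, aux_pow_eq_iff (pow_ne_zero _ hℓ.ne_zero) hζ]
  have h0 : (ℓ : ℤ) ^ (n - m) ≠ 0 := pow_ne_zero _ (by exact_mod_cast hℓ.ne_zero)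
  have h1 : ((ℓ ^ n : ℕ) : ℤ) = (ℓ : ℤ) ^ (n - m) * (ℓ : ℤ) ^ m := by
    push_cast; rw [← pow_add]; congr 1; omega
  rw [h1]
  push_cast
  rw [show (ℓ : ℤ) ^ (n - m) * u - (ℓ : ℤ) ^ (n - m) = (ℓ : ℤ) ^ (n - m) * (u - 1) by ring]
  exact mul_dvd_mul_iff_left h0

lemma aux_prim {ℓ : ℕ} (hℓ : ℓ.Prime) {ζ : AlgebraicClosure K} {n m : ℕ} (hm : m ≤ n)
    (hζ : IsPrimitiveRoot ζ (ℓ ^ n)) : IsPrimitiveRoot (ζ ^ (ℓ ^ (n - m))) (ℓ ^ m) := by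
  refine hζ.pow (pow_pos hℓ.pos n) ?_
  rw [← pow_add]; congr 1; omega

lemma aux_mem_radInf {ℓ : ℕ} (x : (AlgebraicClosure K)ˣ) (hx : x ∈ radInf K ℓ) (m : ℕ) :
    ∃ n, m ≤ n ∧ ∃ y : K, algebraMap K (AlgebraicClosure K) y =
      (x : AlgebraicClosure K) ^ (ℓ ^ n) := by
  obtain ⟨n, hn⟩ := hx
  refine ⟨n + m, by omega, ?_⟩
  rw [pow_add]
  exact radGroup_le K hn

/-- Existence of an automorphism acting on the roots of unity nontrivially mod `ℓ`. -/
lemma aux_tau {ℓ : ℕ} (hℓ : ℓ.Prime) (hl : (ℓ : K) ≠ 0) (hnK : ¬ ∃ z : K, IsPrimitiveRoot z ℓ) :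
    ∃ τ : AlgebraicClosure K ≃ₐ[K] AlgebraicClosure K, ∀ n : ℕ, 1 ≤ n → ∃ u v : ℕ,
      (∀ w : AlgebraicClosure K, w ^ (ℓ ^ n) = 1 → τ w = w ^ u) ∧
      ((ℓ ^ n : ℕ) : ℤ) ∣ ((u : ℤ) - 1) * v - 1 := by
  have hl' : (ℓ : AlgebraicClosure K) ≠ 0 := by
    intro h
    apply hl
    apply (algebraMap K (AlgebraicClosure K)).injective
    simpa using h
  haveI hnz : ∀ n : ℕ, NeZero ((ℓ ^ n : ℕ) : AlgebraicClosure K) := fun n =>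
    ⟨by push_cast; exact pow_ne_zero _ hl'⟩
  haveI : NeZero (ℓ : AlgebraicClosure K) := ⟨hl'⟩
  obtain ⟨ζ, hζ⟩ := HasEnoughRootsOfUnity.exists_primitiveRoot (AlgebraicClosure K) ℓ
  have : ∃ τ : AlgebraicClosure K ≃ₐ[K] AlgebraicClosure K, τ ζ ≠ ζ := by
    by_contra! hcon
    have := aux_fix ⊥ ζ (aux_root_sep hl one_ne_zero (by rw [hζ.pow_eq_one, map_one]))
      (fun g _ => hcon g)
    obtain ⟨y, hy⟩ := IntermediateField.mem_bot.1 this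
    refine hnK ⟨y, ?_⟩
    rw [← hy] at hζ
    exact hζ.of_map_of_injective (algebraMap K (AlgebraicClosure K)).injective
  obtain ⟨τ, hτ⟩ := this
  refine ⟨τ, fun n hn => ?_⟩
  obtain ⟨ξ, hξ⟩ := HasEnoughRootsOfUnity.exists_primitiveRoot (AlgebraicClosure K) (ℓ ^ n)
  obtain ⟨u, hu⟩ := aux_act (pow_ne_zero _ hℓ.ne_zero) hξ τ
  have hu1 : ¬ (ℓ : ℤ) ∣ (u : ℤ) - 1 := by
    intro h
    have h1 := (aux_fix_iff hℓ (m := 1) (u := u) hn hξ).2 (by simpa using h)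
    have h2 := aux_prim hℓ hn hξ
    rw [pow_one] at h2
    haveI : NeZero ℓ := ⟨hℓ.ne_zero⟩
    obtain ⟨i, -, hi⟩ := h2.eq_pow_of_pow_eq_one hζ.pow_eq_one
    apply hτ
    rw [← hi, map_pow, hu _ (by rw [← pow_mul, mul_comm, pow_mul, hξ.pow_eq_one, one_pow]), h1]
  obtain ⟨v, hv⟩ := aux_inv (n := n) hℓ hu1
  exact ⟨u, v, hu, hv⟩

lemma aux_pow_mod {w : AlgebraicClosure K} {q u v : ℕ} (hw : w ^ q = 1)
    (h : (q : ℤ) ∣ ((u : ℤ) - 1) * v - 1) : w ^ (u * v) = w ^ (v + 1) := by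
  have hm : u * v ≡ v + 1 [MOD q] := by
    rw [← Int.natCast_modEq_iff, Int.modEq_comm, Int.modEq_iff_dvd]
    convert h using 1
    push_cast
    ring
  rw [← Nat.mod_add_div (u * v) q, ← Nat.mod_add_div (v + 1) q, hm, pow_add, pow_add, pow_mul,
    pow_mul, hw, one_pow, one_pow]

lemma aux_part1 {ℓ : ℕ} (hℓ : ℓ.Prime) (hl : (ℓ : K) ≠ 0)
    (hnK : ¬ ∃ z : K, IsPrimitiveRoot z ℓ) {x : AlgebraicClosure K} (hx0 : x ≠ 0)
    (hx : x ∈ cyclo2P K) {n : ℕ} (hn : 1 ≤ n)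
    {a : K} (ha : algebraMap K (AlgebraicClosure K) a = x ^ (ℓ ^ n)) :
    ∃ (y : K) (η : AlgebraicClosure K), η ^ (ℓ ^ n) = 1 ∧ η ∈ cyclo2P K ∧
      x = η * algebraMap K _ y := by
  obtain ⟨τ, hτ⟩ := aux_tau hℓ hl hnK
  obtain ⟨u, v, hu, huv⟩ := hτ n hn
  have hgen : ∀ (g : AlgebraicClosure K ≃ₐ[K] AlgebraicClosure K) (y : AlgebraicClosure K),
      y ≠ 0 → y ^ (ℓ ^ n) = algebraMap K _ a → (g y / y) ^ (ℓ ^ n) = 1 := by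
    intro g y hy0 hy
    rw [div_pow, ← map_pow, hy, AlgEquiv.commutes, div_self]
    rw [← hy]; exact pow_ne_zero _ hy0
  set c := τ x / x with hc
  have hc1 : c ^ (ℓ ^ n) = 1 := hgen τ x hx0 ha.symm
  have hcL : c ∈ cyclo2P K := div_mem (aux_normal τ hx) hx
  have hc0 : c ≠ 0 := div_ne_zero (by simpa using hx0) hx0
  have hη1 : (c ^ v) ^ (ℓ ^ n) = 1 := by rw [← pow_mul, mul_comm, pow_mul, hc1, one_pow]
  have hη : τ (c ^ v) = c * c ^ v := by
    rw [hu _ hη1, ← pow_mul, mul_comm, aux_pow_mod hc1 huv, pow_succ, mul_comm]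
  have hη0 : c ^ v ≠ 0 := pow_ne_zero _ hc0
  set y := x / c ^ v with hy
  have hyL : y ∈ cyclo2P K := div_mem hx (pow_mem hcL v)
  have hy0 : y ≠ 0 := div_ne_zero hx0 hη0
  have hyn : y ^ (ℓ ^ n) = algebraMap K _ a := by rw [hy, div_pow, hη1, div_one, ha]
  have hτy : τ y = y := by
    have : τ x = c * x := by rw [hc]; field_simp
    rw [hy, map_div₀, hη, this]
    field_simp
  have hyK : y ∈ (⊥ : IntermediateField K (AlgebraicClosure K)) := by
    refine aux_fix ⊥ y (aux_cyclo_sep hyL) (fun σ _ => ?_)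
    have hd1 := hgen σ y hy0 hyn
    have hτd : τ (σ y / y) = σ y / y := by
      rw [map_div₀, aux_comm τ σ hyL, hτy]
    have hd0 : σ y / y ≠ 0 := div_ne_zero (by simpa using hy0) hy0
    rw [hu _ hd1] at hτd
    have h2 := aux_pow_mod hd1 huv
    rw [pow_mul, hτd, pow_succ] at h2
    have h3 : σ y / y = 1 := by
      apply mul_left_cancel₀ (pow_ne_zero v hd0)
      rw [← h2, mul_one]
    exact (div_eq_one_iff_eq hy0).1 h3
  obtain ⟨b, hb⟩ := IntermediateField.mem_bot.1 hyK
  refine ⟨b, c ^ v, hη1, pow_mem hcL v, ?_⟩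
  rw [hb, hy]; field_simp

/-- An automorphism fixing `ζ_{ℓ^n}` fixes every element of `L ∩ K(ℓ^n-radicals)`. -/
lemma aux_fixes {ℓ : ℕ} (hℓ : ℓ.Prime) (hl : (ℓ : K) ≠ 0)
    (hnK : ¬ ∃ z : K, IsPrimitiveRoot z ℓ) {n : ℕ} (hn : 1 ≤ n) (S : Set (AlgebraicClosure K))
    (hS : ∀ x ∈ S, x ≠ 0 ∧ ∃ y : K, algebraMap K _ y = x ^ (ℓ ^ n))
    {z : AlgebraicClosure K} (hz : z ∈ cyclo2P K) (hzS : z ∈ IntermediateField.adjoin K S)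
    (g : AlgebraicClosure K ≃ₐ[K] AlgebraicClosure K)
    (hg : ∀ w : AlgebraicClosure K, w ^ (ℓ ^ n) = 1 → g w = w) : g z = z := by
  obtain ⟨τ, hτ⟩ := aux_tau hℓ hl hnK
  obtain ⟨u, v, hu, huv⟩ := hτ n hn
  have hroot : ∀ (h : AlgebraicClosure K ≃ₐ[K] AlgebraicClosure K), ∀ x ∈ S,
      ∃ α, α ^ (ℓ ^ n) = 1 ∧ h x = α * x := by
    intro h x hx
    obtain ⟨hx0, y, hy⟩ := hS x hx
    refine ⟨h x / x, ?_, by field_simp⟩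
    rw [div_pow, ← map_pow, ← hy, AlgEquiv.commutes, div_self]
    rw [hy]; exact pow_ne_zero _ hx0
  have hpow : ∀ (x α : AlgebraicClosure K), α ^ (ℓ ^ n) = 1 → g x = α * x →
      ∀ k : ℕ, (g ^ k) x = α ^ k * x := by
    intro x α hα hx k
    induction k with
    | zero => simp
    | succ k ih =>
      rw [pow_succ', AlgEquiv.mul_apply, ih, map_mul, map_pow, hg α hα, hx]; ring
  have h1 : (g ^ (ℓ ^ n)) z = z := by
    refine aux_eq_on S (g ^ (ℓ ^ n)) 1 ?_ hzS
    intro x hx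
    obtain ⟨α, hα, hx'⟩ := hroot g x hx
    rw [hpow x α hα hx', hα, one_mul]; rfl
  have h2 : (g ^ u) (τ z) = g (τ z) := by
    have : (g ^ u * τ) z = (τ * g) z := by
      refine aux_eq_on S _ _ ?_ hzS
      intro x hx
      obtain ⟨α, hα, hx'⟩ := hroot g x hx
      obtain ⟨β, hβ, hx2⟩ := hroot τ x hx
      have hgβ : (g ^ u) β = β := by
        have := hpow β 1 (one_pow _) (by rw [hg β hβ, one_mul]) u
        simpa using this
      rw [AlgEquiv.mul_apply, AlgEquiv.mul_apply, hx2, hx', map_mul, map_mul, hgβ,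
        hpow x α hα hx', hu α hα, hx2]
      ring
    rw [AlgEquiv.mul_apply, AlgEquiv.mul_apply] at this
    rw [this, aux_comm τ g hz]
  have h3 : (g ^ u) z = g z := by
    rw [aux_comm _ τ hz, aux_comm _ τ hz] at h2
    exact τ.injective h2
  let St := MulAction.stabilizer (AlgebraicClosure K ≃ₐ[K] AlgebraicClosure K) z
  have m1 : g ^ ((ℓ ^ n : ℕ) : ℤ) ∈ St := by
    rw [zpow_natCast]; exact h1
  have m2 : g ^ ((u : ℤ) - 1) ∈ St := by
    rw [show (u : ℤ) - 1 = -1 + u by ring, zpow_add, zpow_neg_one, zpow_natCast]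
    change (g⁻¹ * g ^ u) z = z
    rw [AlgEquiv.mul_apply, h3, ← AlgEquiv.mul_apply, inv_mul_cancel]; rfl
  obtain ⟨k, hk⟩ := huv
  have m3 : g ∈ St := by
    have : g = (g ^ ((u : ℤ) - 1)) ^ (v : ℤ) * (g ^ ((ℓ ^ n : ℕ) : ℤ)) ^ (-k) := by
      rw [← zpow_mul, ← zpow_mul, ← zpow_add]
      conv_lhs => rw [← zpow_one g]
      congr 1
      linear_combination -hk
    rw [this]
    exact mul_mem (zpow_mem m2 _) (zpow_mem m1 _)
  exact m3

lemma aux_part2 {ℓ : ℕ} (hℓ : ℓ.Prime) (hodd : Odd ℓ) (hl : (ℓ : K) ≠ 0)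
    (t : ℕ∞) (ht1 : 1 ≤ t)
    (htin : ∀ n : ℕ, (n : ℕ∞) ≤ t → ∀ x : AlgebraicClosure K,
      IsPrimitiveRoot x (ℓ ^ n) → x ∈ cyclo2P K)
    (htmax : ∀ n : ℕ, t < (n : ℕ∞) → ∀ x : AlgebraicClosure K,
      IsPrimitiveRoot x (ℓ ^ n) → x ∉ cyclo2P K)
    (hnK : ¬ ∃ z : K, IsPrimitiveRoot z ℓ) {z : AlgebraicClosure K} (hz : z ∈ cyclo2P K)
    (hzM : z ∈ IntermediateField.adjoin K
      (Units.val '' (radInf K ℓ : Set (AlgebraicClosure K)ˣ))) :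
    z ∈ IntermediateField.adjoin K (pPowRoots K ℓ t) := by
  have hl' : (ℓ : AlgebraicClosure K) ≠ 0 := by
    intro h
    apply hl
    apply (algebraMap K (AlgebraicClosure K)).injective
    simpa using h
  haveI hnz : ∀ n : ℕ, NeZero ((ℓ ^ n : ℕ) : AlgebraicClosure K) := fun n =>
    ⟨by push_cast; exact pow_ne_zero _ hl'⟩
  refine aux_fix _ z (aux_cyclo_sep hz) (fun g hg => ?_)
  obtain ⟨T, hTS, hzT⟩ := IntermediateField.exists_finset_of_mem_adjoin hzM
  -- a common exponent
  have hTn : ∀ T : Finset (AlgebraicClosure K),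
      (T : Set (AlgebraicClosure K)) ⊆ Units.val '' (radInf K ℓ : Set (AlgebraicClosure K)ˣ) →
      ∃ N : ℕ, ∀ n, N ≤ n → ∀ x ∈ (T : Set (AlgebraicClosure K)),
        x ≠ 0 ∧ ∃ y : K, algebraMap K _ y = x ^ (ℓ ^ n) := by
    intro T hT
    have h1 : ∀ x ∈ T, ∃ N : ℕ, ∀ n, N ≤ n →
        x ≠ 0 ∧ ∃ y : K, algebraMap K _ y = x ^ (ℓ ^ n) := by
      intro x hx
      obtain ⟨X, ⟨N, hN⟩, rfl⟩ := hT hx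
      refine ⟨N, fun n hn => ⟨X.ne_zero, ?_⟩⟩
      obtain ⟨d, rfl⟩ := Nat.exists_eq_add_of_le hn
      rw [pow_add]
      exact radGroup_le K hN
    choose! f hf using h1
    exact ⟨T.sup f, fun n hn x hx => hf x hx n ((Finset.le_sup hx).trans hn)⟩
  obtain ⟨N, hN⟩ := hTn T hTS
  have hfin : ∀ n, N ≤ n → 1 ≤ n → ∀ g' : AlgebraicClosure K ≃ₐ[K] AlgebraicClosure K,
      (∀ w : AlgebraicClosure K, w ^ (ℓ ^ n) = 1 → g' w = w) → g' z = z := by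
    intro n hn hn1 g' hg'
    exact aux_fixes hℓ hl hnK hn1 _ (hN n hn) hz hzT g' hg'
  have hgE : ∀ m : ℕ, (m : ℕ∞) ≤ t → ∀ x, IsPrimitiveRoot x (ℓ ^ m) → g x = x := by
    intro m hm x hx
    exact hg x (IntermediateField.subset_adjoin _ _ ⟨m, hm, hx⟩)
  induction t with
  | top =>
    refine hfin (N + 1) (by omega) (by omega) g (fun w hw => ?_)
    obtain ⟨k, -, hk⟩ := (Nat.dvd_prime_pow hℓ).1 (orderOf_dvd_of_pow_eq_one hw)
    exact hgE k le_top w (hk ▸ IsPrimitiveRoot.orderOf w)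
  | coe t =>
    have ht : 1 ≤ t := by exact_mod_cast ht1
    set n := t + (N + 1) with hn
    obtain ⟨ζ, hζ⟩ := HasEnoughRootsOfUnity.exists_primitiveRoot (AlgebraicClosure K) (ℓ ^ n)
    have hq0 : ℓ ^ n ≠ 0 := pow_ne_zero _ hℓ.ne_zero
    have hpw : ∀ i, (ζ ^ i) ^ (ℓ ^ n) = 1 := fun i => by
      rw [← pow_mul, mul_comm, pow_mul, hζ.pow_eq_one, one_pow]
    -- an automorphism fixing L and moving ζ_{ℓ^(t+1)}
    have hp1 := aux_prim hℓ (m := t + 1) (by omega) hζ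
    have hp0 := aux_prim hℓ (m := t) (by omega) hζ
    have : ∃ σ : AlgebraicClosure K ≃ₐ[K] AlgebraicClosure K, (∀ x ∈ cyclo2P K, σ x = x) ∧
        σ (ζ ^ (ℓ ^ (n - (t + 1)))) ≠ ζ ^ (ℓ ^ (n - (t + 1))) := by
      by_contra! hcon
      refine htmax (t + 1) (by exact_mod_cast Nat.lt_succ_self t) _ hp1
        (aux_fix _ _ ?_ hcon)
      refine aux_root_sep (n := ℓ ^ (t + 1)) ?_ one_ne_zero (by rw [hp1.pow_eq_one, map_one])
      push_cast
      exact pow_ne_zero _ hl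
    obtain ⟨σ, hσL, hσ⟩ := this
    obtain ⟨u, hu⟩ := aux_act hq0 hζ σ
    obtain ⟨v, hv⟩ := aux_act hq0 hζ g
    have hu1 : (ℓ : ℤ) ^ t ∣ (u : ℤ) - 1 := by
      rw [← aux_fix_iff hℓ (n := n) (by omega) hζ, ← hu _ (hpw _)]
      exact hσL _ (htin t le_rfl _ hp0)
    have hu2 : ¬ (ℓ : ℤ) ^ (t + 1) ∣ (u : ℤ) - 1 := by
      rw [← aux_fix_iff hℓ (n := n) (by omega) hζ, ← hu _ (hpw _)]
      exact hσ
    have hv1 : (ℓ : ℤ) ^ t ∣ (v : ℤ) - 1 := by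
      rw [← aux_fix_iff hℓ (n := n) (by omega) hζ, ← hv _ (hpw _)]
      exact hgE t le_rfl _ hp0
    obtain ⟨k, hk⟩ := aux_pow hℓ hodd ht hu1 hu2 hv1 (N + 1)
    have hσk : ∀ k : ℕ, (σ ^ k) ζ = ζ ^ (u ^ k) := by
      intro k
      induction k with
      | zero => simp
      | succ k ih =>
        rw [pow_succ', AlgEquiv.mul_apply, ih, map_pow, hu ζ hζ.pow_eq_one, ← pow_mul, pow_succ',
          mul_comm]
    have hσz : ∀ k : ℕ, (σ ^ k) z = z := by
      intro k
      induction k with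
      | zero => simp
      | succ k ih => rw [pow_succ', AlgEquiv.mul_apply, ih, hσL z hz]
    have hgζ : g ζ = (σ ^ k) ζ := by
      rw [hσk, hv ζ hζ.pow_eq_one, eq_comm, aux_pow_eq_iff hq0 hζ]
      push_cast
      exact hk
    have hfix := hfin n (by omega) (by omega) ((σ ^ k)⁻¹ * g) (fun w hw => by
      haveI : NeZero (ℓ ^ n) := ⟨hq0⟩
      obtain ⟨i, -, rfl⟩ := hζ.eq_pow_of_pow_eq_one hw
      rw [map_pow, AlgEquiv.mul_apply, hgζ, ← AlgEquiv.mul_apply, inv_mul_cancel,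
        AlgEquiv.one_apply])
    have := congrArg (σ ^ k) hfix
    rw [← AlgEquiv.mul_apply, mul_inv_cancel_left, hσz] at this
    exact this

end helpers

/-- Theorem 1.1 (first part): if `ℓ` is odd or `ζ₄ ∈ K`, `ℓ ≠ char K`, `t ≥ 1` is the largest
element of `ℕ ∪ {∞}` with `ζ_{ℓ^t} ∈ K(ζ_{2𝒫})`, and `ζ_ℓ ∉ K`, then
`K(ζ_{2𝒫}) ∩ √[ℓ^∞]{K^×} = ⟨ζ_{ℓ^t}, K^×⟩` and
`K(ζ_{2𝒫}) ∩ K(√[ℓ^∞]{K^×}) = K(ζ_{ℓ^t})`. -/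
theorem stmt0 (K : Type*) [Field K] (ℓ : ℕ) (hℓ : ℓ.Prime) (hchar : ringChar K ≠ ℓ)
    (hodd : Odd ℓ ∨ ∃ z : K, IsPrimitiveRoot z 4)
    (t : ℕ∞) (ht1 : 1 ≤ t)
    (htin : ∀ n : ℕ, (n : ℕ∞) ≤ t → ∀ x : AlgebraicClosure K,
      IsPrimitiveRoot x (ℓ ^ n) → x ∈ cyclo2P K)
    (htmax : ∀ n : ℕ, t < (n : ℕ∞) → ∀ x : AlgebraicClosure K,
      IsPrimitiveRoot x (ℓ ^ n) → x ∉ cyclo2P K)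
    (hnK : ¬ ∃ z : K, IsPrimitiveRoot z ℓ) :
    unitsIn (cyclo2P K) ⊓ radInf K ℓ =
      Subgroup.closure (pPowRootsUnits K ℓ t) ⊔ baseUnits K ∧
    cyclo2P K ⊓
        IntermediateField.adjoin K (Units.val '' (radInf K ℓ : Set (AlgebraicClosure K)ˣ)) =
      IntermediateField.adjoin K (pPowRoots K ℓ t) := by
  have hl : (ℓ : K) ≠ 0 := by
    rw [Ne, ringChar.spec]
    intro h
    rcases (Nat.dvd_prime hℓ).1 h with h | h
    · haveI := ringChar.charP K
      exact CharP.ringChar_ne_one h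
    · exact hchar h
  have hodd' : Odd ℓ := by
    rcases hℓ.eq_two_or_odd' with rfl | h
    · exfalso
      apply hnK
      refine ⟨-1, IsPrimitiveRoot.neg_one (ringChar K) hchar⟩
    · exact h
  constructor
  · apply le_antisymm
    · rintro x ⟨hxL, hxR⟩
      obtain ⟨n, hn, a, ha⟩ := aux_mem_radInf x hxR 1
      obtain ⟨y, η, hη1, hηL, hxy⟩ := aux_part1 hℓ hl hnK x.ne_zero hxL hn ha
      have hx0 := x.ne_zero
      have hη0 : η ≠ 0 := by rintro rfl; simp at hxy
      have hy0 : y ≠ 0 := by rintro rfl; simp at hxy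
      have hx : x = Units.mk0 η hη0 *
          Units.map (algebraMap K (AlgebraicClosure K)).toMonoidHom (Units.mk0 y hy0) := by
        ext
        simpa using hxy
      rw [hx]
      refine Subgroup.mul_mem_sup (Subgroup.subset_closure ?_) ⟨_, rfl⟩
      obtain ⟨k, -, hk⟩ := (Nat.dvd_prime_pow hℓ).1 (orderOf_dvd_of_pow_eq_one hη1)
      have hprim : IsPrimitiveRoot η (ℓ ^ k) := hk ▸ IsPrimitiveRoot.orderOf η
      refine ⟨k, ?_, hprim⟩
      by_contra hlt
      exact htmax k (not_le.1 hlt) η hprim hηL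
    · refine sup_le ((Subgroup.closure_le _).2 ?_) ?_
      · rintro x ⟨n, hn, hx⟩
        exact ⟨htin n hn _ hx, n, 1, by rw [hx.pow_eq_one, map_one]⟩
      · rintro _ ⟨y, rfl⟩
        exact ⟨(cyclo2P K).algebraMap_mem _, 0, (y : K), by simp⟩
  · apply le_antisymm
    · rintro z ⟨hz, hzM⟩
      exact aux_part2 hℓ hodd' hl t ht1 htin htmax hnK hz hzM
    · refine IntermediateField.adjoin_le_iff.2 ?_
      rintro x ⟨n, hn, hx⟩
      refine ⟨htin n hn _ hx, IntermediateField.subset_adjoin _ _ ?_⟩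
      exact ⟨Units.mk0 x (hx.ne_zero (pow_ne_zero _ hℓ.ne_zero)),
        ⟨n, 1, by rw [Units.val_mk0, hx.pow_eq_one, map_one]⟩, rfl⟩

end
end

section
/- Let char(K) ≠ 2 and ζ_4 ∉ K. If all 2-power-order roots of unity lie in K(ζ_{2𝒫}), then K(ζ_{2𝒫}) ∩ √[2^∞]{K^×} = ⟨ζ_{2^∞}, K(ζ_{2𝒫}) ∩ √{K^×}⟩ (where ζ_{2^∞} denotes all roots of unity of 2-power order) and K(ζ_{2𝒫}) ∩ K(√[2^∞]{K^×}) = K(ζ_{2^∞}, K(ζ_{2𝒫}) ∩ √{K^×}). -/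
noncomputable section

open IntermediateField

section helpers

variable {K : Type*} [Field K]

lemma aux_two_ne (hchar : ringChar K ≠ 2) : (2 : K) ≠ 0 := by
  exact Ring.two_ne_zero hchar

lemma aux_fix_s3 (hchar : ringChar K ≠ 2) (F : IntermediateField K (AlgebraicClosure K))
    (x : AlgebraicClosure K) (hx : x ≠ 0) (n : ℕ) (a : K)
    (ha : algebraMap K (AlgebraicClosure K) a = x ^ (2 ^ n))
    (hfix : ∀ σ : AlgebraicClosure K ≃ₐ[K] AlgebraicClosure K,
      (∀ z ∈ F, σ z = z) → σ x = x) : x ∈ F := by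
  have h2 : (2 : K) ≠ 0 := aux_two_ne hchar
  have ha0 : a ≠ 0 := by
    rintro rfl
    rw [map_zero] at ha
    exact pow_ne_zero _ hx ha.symm
  have hsepK : IsSeparable K x := by
    have hd : minpoly K x ∣ (Polynomial.X ^ (2 ^ n) - Polynomial.C a) := by
      apply minpoly.dvd
      simp [ha]
    exact (Polynomial.separable_X_pow_sub_C a (by push_cast; exact pow_ne_zero _ h2) ha0).of_dvd hd
  have hsep : IsSeparable F x := hsepK.tower_top F
  by_contra hxF
  have hnot : x ∉ (⊥ : Subalgebra F (AlgebraicClosure K)) := by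
    intro h
    obtain ⟨y, hy⟩ := Algebra.mem_bot.1 h
    apply hxF
    rw [← hy]
    exact y.2
  obtain ⟨y, hne, hc⟩ := (notMem_iff_exists_ne_and_isConjRoot hsep
    (IsAlgClosed.splits _)).1 hnot
  haveI : Normal F (AlgebraicClosure K) := normal_iff.2 fun z =>
    ⟨Algebra.IsIntegral.isIntegral z, IsAlgClosed.splits _⟩
  obtain ⟨σ, hσ⟩ := hc.symm.exists_algEquiv
  apply hne
  rw [← hσ]
  exact (hfix (σ.restrictScalars K) (fun z hz => σ.commutes ⟨z, hz⟩)).symm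

lemma aux_base (hchar : ringChar K ≠ 2)
    (x : AlgebraicClosure K) (hx : x ≠ 0) (n : ℕ) (a : K)
    (ha : algebraMap K (AlgebraicClosure K) a = x ^ (2 ^ n))
    (hfix : ∀ σ : AlgebraicClosure K ≃ₐ[K] AlgebraicClosure K, σ x = x) :
    ∃ b : K, algebraMap K (AlgebraicClosure K) b = x := by
  have := aux_fix_s3 hchar ⊥ x hx n a ha (fun σ _ => hfix σ)
  exact IntermediateField.mem_bot.1 this

lemma aux_prim_s3 (hchar : ringChar K ≠ 2) (n : ℕ) :
    ∃ z : AlgebraicClosure K, IsPrimitiveRoot z (2 ^ n) := by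
  have h2 : (2 : AlgebraicClosure K) ≠ 0 := by
    have := (map_ne_zero (algebraMap K (AlgebraicClosure K))).2 (aux_two_ne hchar)
    rwa [map_ofNat] at this
  haveI : NeZero ((2 ^ n : ℕ) : AlgebraicClosure K) := ⟨by push_cast; exact pow_ne_zero _ h2⟩
  exact HasEnoughRootsOfUnity.exists_primitiveRoot _ _

lemma aux_four (σ : AlgebraicClosure K ≃ₐ[K] AlgebraicClosure K) (i j : AlgebraicClosure K)
    (hi : IsPrimitiveRoot i 4) (hσ : σ i ≠ i) (hj : IsPrimitiveRoot j 4) : σ j ≠ j := by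
  intro h
  obtain ⟨k, -, rfl⟩ := hj.eq_pow_of_pow_eq_one hi.pow_eq_one
  exact hσ (by rw [map_pow, h])

lemma aux_C (σ : AlgebraicClosure K ≃ₐ[K] AlgebraicClosure K) (i r : AlgebraicClosure K)
    (hi : IsPrimitiveRoot i 4) (hσ : σ i ≠ i) (n : ℕ) (hr : r ^ (2 ^ n) = 1) (h : σ r = r) :
    r ^ 2 = 1 := by
  obtain ⟨m, -, hm⟩ := (Nat.dvd_prime_pow Nat.prime_two).1 (orderOf_dvd_of_pow_eq_one hr)
  have hp : IsPrimitiveRoot r (2 ^ m) := hm ▸ IsPrimitiveRoot.orderOf r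
  rcases m with _ | _ | m
  · simp at hp; simp [hp]
  · simpa using hp.pow_eq_one
  · exfalso
    have := hp.pow (a := 2 ^ m) (b := 4) (by positivity) (by ring)
    exact aux_four σ i _ hi hσ this (by rw [map_pow, h])

lemma aux_B (hchar : ringChar K ≠ 2)
    (σ : AlgebraicClosure K ≃ₐ[K] AlgebraicClosure K) (i w : AlgebraicClosure K)
    (hi : IsPrimitiveRoot i 4) (hσ : σ i ≠ i) (n : ℕ) (hw : w ^ (2 ^ n) = 1) :
    ∃ e : AlgebraicClosure K, e ^ (2 ^ (n + 2)) = 1 ∧ σ e = w * e := by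
  obtain ⟨z, hz⟩ := aux_prim_s3 hchar (n + 2)
  have hpos : 0 < 2 ^ (n + 2) := by positivity
  haveI : NeZero (2 ^ (n + 2)) := ⟨hpos.ne'⟩
  obtain ⟨c, -, hc⟩ := hz.eq_pow_of_pow_eq_one
    (show σ z ^ (2 ^ (n + 2)) = 1 by rw [← map_pow, hz.pow_eq_one, map_one])
  obtain ⟨j, -, hj⟩ := hz.eq_pow_of_pow_eq_one
    (show w ^ (2 ^ (n + 2)) = 1 by rw [pow_add, pow_mul, hw, one_pow])
  have hj4 : 4 ∣ j := by
    have : z ^ (j * 2 ^ n) = 1 := by rw [pow_mul, hj, hw]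
    have := hz.dvd_of_pow_eq_one _ this
    rw [pow_add, mul_comm] at this
    simpa using Nat.dvd_of_mul_dvd_mul_right (by positivity) this
  have hz4 : IsPrimitiveRoot (z ^ 2 ^ n) 4 := hz.pow hpos (by ring)
  have hs4 := aux_four σ i _ hi hσ hz4
  have hs4' : IsPrimitiveRoot (σ (z ^ 2 ^ n)) 4 := hz4.map_of_injective σ.injective
  have e4 : σ (z ^ 2 ^ n) = (z ^ 2 ^ n) ^ c := by
    rw [map_pow, ← hc, ← pow_mul, ← pow_mul, mul_comm]
  have hcm : (z ^ 2 ^ n) ^ c = (z ^ 2 ^ n) ^ (c % 4) := by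
    conv_lhs => rw [← Nat.div_add_mod c 4, pow_add, pow_mul, hz4.pow_eq_one, one_pow, one_mul]
  have hc3 : c % 4 = 3 := by
    have hlt : c % 4 < 4 := Nat.mod_lt _ (by norm_num)
    rw [e4, hcm] at hs4 hs4'
    interval_cases hh : c % 4
    · exact absurd (hs4'.dvd_of_pow_eq_one 1 (by simp)) (by norm_num)
    · simp at hs4
    · exact absurd (hs4'.dvd_of_pow_eq_one 2
        (by rw [← pow_mul]; exact hz4.pow_eq_one)) (by norm_num)
    · rfl
  obtain ⟨d, hd⟩ : ∃ d, c = 4 * d + 3 := ⟨c / 4, by omega⟩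
  obtain ⟨l, hl⟩ : ∃ l, (2 * d + 1) * l % 2 ^ (n + 2) = 1 := by
    have hco : Nat.Coprime (2 * d + 1) (2 ^ (n + 2)) := by
      apply Nat.Coprime.pow_right
      simp
    obtain ⟨l, -, hl⟩ := Nat.exists_mul_mod_eq_one_of_coprime hco
      (Nat.one_lt_two_pow (by omega))
    exact ⟨l, hl⟩
  obtain ⟨q, hq⟩ : ∃ q, (2 * d + 1) * l = 2 ^ (n + 2) * q + 1 :=
    ⟨(2 * d + 1) * l / 2 ^ (n + 2), by
      conv_lhs => rw [← Nat.div_add_mod ((2 * d + 1) * l) (2 ^ (n + 2)), hl]⟩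
  obtain ⟨t, rfl⟩ := hj4
  refine ⟨z ^ (2 * t * l), by rw [← pow_mul, mul_comm, pow_mul, hz.pow_eq_one, one_pow], ?_⟩
  rw [map_pow, ← hc, ← hj, ← pow_mul, ← pow_add, hd]
  have : (4 * d + 3) * (2 * t * l) = 2 ^ (n + 2) * (q * (4 * t)) + (4 * t + 2 * t * l) := by
    calc _ = (4 * t) * ((2 * d + 1) * l) + 2 * t * l := by ring
      _ = _ := by rw [hq]; ring
  rw [this, pow_add, pow_mul, hz.pow_eq_one, one_pow, one_mul]

lemma aux_comm_s3 (σ τ : AlgebraicClosure K ≃ₐ[K] AlgebraicClosure K) (x : AlgebraicClosure K)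
    (hx : x ∈ cyclo2P K) : σ (τ x) = τ (σ x) := by
  unfold cyclo2P at hx
  induction hx using IntermediateField.adjoin_induction with
  | mem x hx =>
    obtain ⟨n, hn, -, hp⟩ := hx
    haveI : NeZero n := ⟨by rcases hn with rfl | ⟨hn, -⟩; · norm_num
                            exact hn.ne_zero⟩
    obtain ⟨a, -, ha⟩ := hp.eq_pow_of_pow_eq_one
      (show σ x ^ n = 1 by rw [← map_pow, hp.pow_eq_one, map_one])
    obtain ⟨b, -, hb⟩ := hp.eq_pow_of_pow_eq_one
      (show τ x ^ n = 1 by rw [← map_pow, hp.pow_eq_one, map_one])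
    rw [← ha, ← hb, map_pow, map_pow, ← ha, ← hb, ← pow_mul, ← pow_mul, mul_comm]
  | algebraMap x => simp
  | add x y _ _ hx hy => simp [hx, hy]
  | inv x _ hx => simp [hx]
  | mul x y _ _ hx hy => simp [hx, hy]

lemma aux_one (hchar : ringChar K ≠ 2)
    (h4 : ¬ ∃ z : K, IsPrimitiveRoot z 4)
    (hall : ∀ (n : ℕ) (x : AlgebraicClosure K), IsPrimitiveRoot x (2 ^ n) → x ∈ cyclo2P K)
    (x : AlgebraicClosure K) (hx0 : x ≠ 0) (hx : x ∈ cyclo2P K) (n : ℕ) (a : K)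
    (ha : algebraMap K (AlgebraicClosure K) a = x ^ (2 ^ n)) :
    ∃ e y : AlgebraicClosure K, x = e * y ∧ e ≠ 0 ∧ y ≠ 0 ∧
      (∃ m, IsPrimitiveRoot e (2 ^ m)) ∧ y ∈ cyclo2P K ∧
      ∃ b : K, algebraMap K (AlgebraicClosure K) b = y ^ 2 := by
  obtain ⟨i, hi⟩ := aux_prim_s3 hchar 2
  norm_num at hi
  obtain ⟨σ, hσ⟩ : ∃ σ : AlgebraicClosure K ≃ₐ[K] AlgebraicClosure K, σ i ≠ i := by
    by_contra! hcon
    obtain ⟨b, hb⟩ := aux_base hchar i (hi.ne_zero (by norm_num)) 2 1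
      (by simpa using hi.pow_eq_one.symm) hcon
    exact h4 ⟨b, IsPrimitiveRoot.of_map_of_injective (f := algebraMap K (AlgebraicClosure K))
      (by rwa [hb]) (algebraMap K (AlgebraicClosure K)).injective⟩
  have hroot : ∀ τ : AlgebraicClosure K ≃ₐ[K] AlgebraicClosure K, (τ x / x) ^ (2 ^ n) = 1 := by
    intro τ
    rw [div_pow, ← map_pow, ← ha, AlgEquiv.commutes, div_self]
    rw [ha]; exact pow_ne_zero _ hx0
  obtain ⟨e, he, hse⟩ := aux_B hchar σ i (σ x / x) hi hσ n (hroot σ)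
  have he0 : e ≠ 0 := by
    rintro rfl
    rw [zero_pow (by positivity)] at he
    exact zero_ne_one he
  obtain ⟨m, -, hm⟩ := (Nat.dvd_prime_pow Nat.prime_two).1 (orderOf_dvd_of_pow_eq_one he)
  have hp : IsPrimitiveRoot e (2 ^ m) := hm ▸ IsPrimitiveRoot.orderOf e
  have hy0 : x / e ≠ 0 := div_ne_zero hx0 he0
  have hyF : x / e ∈ cyclo2P K := div_mem hx (hall _ _ hp)
  have hya : algebraMap K (AlgebraicClosure K) (a ^ 4) = (x / e) ^ (2 ^ (n + 2)) := by
    rw [map_pow, ha, div_pow, he, div_one, ← pow_mul]; congr 1; ring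
  have hsy : σ (x / e) = x / e := by
    have hsx : σ x ≠ 0 := (map_ne_zero σ).2 hx0
    rw [map_div₀, hse]; field_simp
  refine ⟨e, x / e, by field_simp, he0, hy0, ⟨m, hp⟩, hyF, ?_⟩
  refine aux_base hchar _ (pow_ne_zero _ hy0) (n + 2) (a ^ 8) ?_ ?_
  · rw [← pow_mul, mul_comm, pow_mul, ← hya, ← map_pow]; congr 1; ring
  · intro τ
    have h1 : (τ (x / e) / (x / e)) ^ (2 ^ (n + 2)) = 1 := by
      rw [div_pow, ← map_pow, ← hya, AlgEquiv.commutes, div_self]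
      rw [hya]; exact pow_ne_zero _ hy0
    have h2 : σ (τ (x / e) / (x / e)) = τ (x / e) / (x / e) := by
      rw [map_div₀ σ, aux_comm_s3 σ τ _ hyF, hsy]
    have h3 := aux_C σ i _ hi hσ _ h1 h2
    rw [div_pow, div_eq_one_iff_eq (pow_ne_zero _ hy0)] at h3
    rw [map_pow, h3]

/-- the Kummer character -/
def kumChar (F : IntermediateField K (AlgebraicClosure K)) (r : AlgebraicClosure K) (hr : r ≠ 0)
    (h : ∀ σ : AlgebraicClosure K ≃ₐ[K] AlgebraicClosure K, σ r / r ∈ F) :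
    F.fixingSubgroup →* AlgebraicClosure K where
  toFun σ := σ.1 r / r
  map_one' := by simp [hr]
  map_mul' σ τ := by
    have h1 : σ.1 (τ.1 r / r) = τ.1 r / r :=
      (IntermediateField.mem_fixingSubgroup_iff F σ.1).1 σ.2 _ (h _)
    have h2 : σ.1 (τ.1 r) = σ.1 (τ.1 r / r) * σ.1 r := by
      rw [map_div₀, div_mul_cancel₀]
      exact (map_ne_zero σ.1).2 hr
    show σ.1 (τ.1 r) / r = _
    rw [h2, h1]; ring

open Classical in
lemma aux_kummer (F : IntermediateField K (AlgebraicClosure K))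
    (R : Set (AlgebraicClosure K)) (hR0 : ∀ r ∈ R, r ≠ 0)
    (hR : ∀ r ∈ R, ∀ σ : AlgebraicClosure K ≃ₐ[K] AlgebraicClosure K, σ r / r ∈ F)
    (hfix : ∀ r ∈ R, (∀ σ : AlgebraicClosure K ≃ₐ[K] AlgebraicClosure K,
      (∀ z ∈ F, σ z = z) → σ r = r) → r ∈ F)
    (z : AlgebraicClosure K) (hzF : z ∈ F) (hz : z ∈ Submodule.span K R) :
    z ∈ Submodule.span K (R ∩ F) := by
  obtain ⟨c, t, htR, -, hsum⟩ := Submodule.mem_span_iff_exists_finset_subset.1 hz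
  let χ : AlgebraicClosure K → (F.fixingSubgroup →* AlgebraicClosure K) := fun r =>
    if h : r ∈ R then kumChar F r (hR0 r h) (hR r h) else 1
  have hli := linearIndependent_monoidHom F.fixingSubgroup (AlgebraicClosure K)
  let f : (F.fixingSubgroup →* AlgebraicClosure K) →₀ AlgebraicClosure K :=
    (∑ r ∈ t, Finsupp.single (χ r) (c r • r)) - Finsupp.single 1 z
  have hf : f = 0 := by
    apply (linearIndependent_iff.1 hli) f
    simp only [f, map_sub, map_sum, Finsupp.linearCombination_single]
    ext σ
    simp only [Pi.sub_apply, Finset.sum_apply, Pi.smul_apply, MonoidHom.one_apply, smul_eq_mul,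
      Pi.zero_apply, mul_one]
    have h1 : σ.1 z = z := (IntermediateField.mem_fixingSubgroup_iff F σ.1).1 σ.2 _ hzF
    rw [sub_eq_zero]
    conv_rhs => rw [← h1, ← hsum, map_sum]
    apply Finset.sum_congr rfl
    intro r hr
    have hrR : r ∈ R := htR hr
    have hr0 := hR0 r hrR
    simp only [χ, dif_pos hrR, kumChar, MonoidHom.coe_mk, OneHom.coe_mk, map_smul]
    rw [smul_mul_assoc, mul_div_cancel₀ _ hr0]
  have h1 := DFunLike.congr_fun hf 1
  simp only [f, Finsupp.coe_sub, Pi.sub_apply, Finsupp.finsetSum_apply, Finsupp.single_apply,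
    if_true, Finsupp.coe_zero, Pi.zero_apply, sub_eq_zero] at h1
  rw [← h1]
  refine Submodule.sum_mem _ fun r hr => ?_
  split_ifs with hχ
  · have hrR : r ∈ R := htR hr
    refine Submodule.smul_mem _ _ (Submodule.subset_span ⟨hrR, hfix r hrR fun σ hσ => ?_⟩)
    have := DFunLike.congr_fun hχ ⟨σ, (IntermediateField.mem_fixingSubgroup_iff F σ).2 hσ⟩
    simp only [χ, dif_pos hrR, kumChar, MonoidHom.coe_mk, OneHom.coe_mk,
      MonoidHom.one_apply] at this
    rwa [div_eq_one_iff_eq (hR0 r hrR)] at this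
  · exact zero_mem _

end helpers

/-- Theorem 1.2 (first case): if `char K ≠ 2`, `ζ₄ ∉ K` and all `2`-power order roots of unity
lie in `K(ζ_{2𝒫})`, then `K(ζ_{2𝒫}) ∩ √[2^∞]{K^×} = ⟨ζ_{2^∞}, K(ζ_{2𝒫}) ∩ √{K^×}⟩` and
`K(ζ_{2𝒫}) ∩ K(√[2^∞]{K^×}) = K(ζ_{2^∞}, K(ζ_{2𝒫}) ∩ √{K^×})`. -/
theorem stmt3 (K : Type*) [Field K] (hchar : ringChar K ≠ 2)
    (h4 : ¬ ∃ z : K, IsPrimitiveRoot z 4)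
    (hall : ∀ (n : ℕ) (x : AlgebraicClosure K), IsPrimitiveRoot x (2 ^ n) → x ∈ cyclo2P K) :
    unitsIn (cyclo2P K) ⊓ radInf K 2 =
      Subgroup.closure (pPowRootsUnits K 2 ⊤) ⊔ (unitsIn (cyclo2P K) ⊓ radGroup K 2) ∧
    cyclo2P K ⊓
        IntermediateField.adjoin K (Units.val '' (radInf K 2 : Set (AlgebraicClosure K)ˣ)) =
      IntermediateField.adjoin K (pPowRoots K 2 ⊤ ∪
        Units.val '' ((unitsIn (cyclo2P K) ⊓ radGroup K 2) : Set (AlgebraicClosure K)ˣ)) := by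
  have hprad : ∀ (x : (AlgebraicClosure K)ˣ) (n : ℕ),
      IsPrimitiveRoot (x : AlgebraicClosure K) (2 ^ n) → x ∈ radInf K 2 := by
    intro x n hx
    exact ⟨n, 1, by rw [map_one, hx.pow_eq_one]⟩
  have hle2 : radGroup K 2 ≤ radInf K 2 := fun x hx => ⟨1, by simpa using hx⟩
  have hone : unitsIn (cyclo2P K) ⊓ radInf K 2 =
      Subgroup.closure (pPowRootsUnits K 2 ⊤) ⊔ (unitsIn (cyclo2P K) ⊓ radGroup K 2) := by
    apply le_antisymm
    · rintro x ⟨hxF, n, a, ha⟩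
      obtain ⟨e, y, hxy, he0, hy0, ⟨m, hm⟩, hyF, b, hb⟩ :=
        aux_one hchar h4 hall x x.ne_zero hxF n a ha
      have : x = Units.mk0 e he0 * Units.mk0 y hy0 := Units.ext (by simpa using hxy)
      rw [this]
      exact Subgroup.mul_mem_sup (Subgroup.subset_closure ⟨m, le_top, by simpa using hm⟩)
        ⟨hyF, b, by simpa using hb⟩
    · refine sup_le ((Subgroup.closure_le _).2 ?_) (inf_le_inf_left _ hle2)
      rintro x ⟨n, -, hn⟩
      exact ⟨hall n _ hn, hprad x n hn⟩
  refine ⟨hone, le_antisymm ?_ ?_⟩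
  · rintro z ⟨hzF, hzL⟩
    have hzL' : z ∈ Submodule.span K
        (Units.val '' (radInf K 2 : Set (AlgebraicClosure K)ˣ)) := by
      have h1 : z ∈ (IntermediateField.adjoin K
        (Units.val '' (radInf K 2 : Set (AlgebraicClosure K)ˣ))).toSubalgebra := hzL
      rw [IntermediateField.adjoin_toSubalgebra] at h1
      have h2 := Algebra.adjoin_eq_span K
        (Units.val '' (radInf K 2 : Set (AlgebraicClosure K)ˣ))
      have h3 : Submonoid.closure (Units.val '' (radInf K 2 : Set (AlgebraicClosure K)ˣ)) =
          (radInf K 2).toSubmonoid.map (Units.coeHom (AlgebraicClosure K)) :=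
        Submonoid.closure_eq ((radInf K 2).toSubmonoid.map (Units.coeHom (AlgebraicClosure K)))
      rw [h3] at h2
      have h4 : z ∈ Subalgebra.toSubmodule (Algebra.adjoin K
        (Units.val '' (radInf K 2 : Set (AlgebraicClosure K)ˣ))) := h1
      rw [h2] at h4
      exact h4
    have key := aux_kummer (cyclo2P K) _ ?_ ?_ ?_ z hzF hzL'
    · have hsub : Submodule.span K
          ((Units.val '' (radInf K 2 : Set (AlgebraicClosure K)ˣ)) ∩ (cyclo2P K)) ≤
          Subalgebra.toSubmodule (IntermediateField.adjoin K (pPowRoots K 2 ⊤ ∪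
        Units.val '' ((unitsIn (cyclo2P K) ⊓ radGroup K 2) :
          Set (AlgebraicClosure K)ˣ))).toSubalgebra := by
        rw [Submodule.span_le]
        rintro _ ⟨⟨x, ⟨n, a, ha⟩, rfl⟩, hxF⟩
        obtain ⟨e, y, hxy, he0, hy0, ⟨m, hm⟩, hyF, b, hb⟩ :=
          aux_one hchar h4 hall x x.ne_zero hxF n a ha
        rw [hxy]
        show e * y ∈ IntermediateField.adjoin K _
        refine mul_mem (IntermediateField.subset_adjoin _ _ (Or.inl ⟨m, le_top, hm⟩))
          (IntermediateField.subset_adjoin _ _ (Or.inr ⟨Units.mk0 y hy0,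
            ⟨hyF, b, by simpa using hb⟩, rfl⟩))
      exact hsub key
    · rintro _ ⟨x, -, rfl⟩
      exact x.ne_zero
    · rintro _ ⟨x, ⟨n, a, ha⟩, rfl⟩ σ
      have h1 : (σ (x : AlgebraicClosure K) / x) ^ (2 ^ n) = 1 := by
        rw [div_pow, ← map_pow, ← ha, AlgEquiv.commutes, div_self]
        rw [ha]; exact pow_ne_zero _ x.ne_zero
      obtain ⟨m, -, hm⟩ := (Nat.dvd_prime_pow Nat.prime_two).1 (orderOf_dvd_of_pow_eq_one h1)
      exact hall m _ (hm ▸ IsPrimitiveRoot.orderOf _)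
    · rintro _ ⟨x, ⟨n, a, ha⟩, rfl⟩ hfix
      exact aux_fix_s3 hchar _ _ x.ne_zero n a ha hfix
  · rw [IntermediateField.adjoin_le_iff]
    rintro x (⟨n, -, hn⟩ | ⟨x, ⟨hxF, hx⟩, rfl⟩)
    · refine ⟨hall n x hn, IntermediateField.subset_adjoin _ _
        ⟨Units.mk0 x (hn.ne_zero (by positivity)), hprad _ n (by simpa using hn), rfl⟩⟩
    · exact ⟨hxF, IntermediateField.subset_adjoin _ _ ⟨x, hle2 hx, rfl⟩⟩

end
end

section
/- Let p be a prime and ℓ ≠ p a prime. Then the extension of 𝔽_p generated by all roots of unity (in a fixed algebraic closure of 𝔽_p) whose order is 4 or an odd prime different from p contains every root of unity of ℓ-power order. -/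
noncomputable section

open IntermediateField

lemma aux_zmod_two : ∀ a : ZMod 2, a = 0 ∨ a = 1 := by decide

lemma aux_not_sq_dvd (ℓ P : ℕ) (hℓ : ℓ.Prime) (hP : 1 < P) (h2 : ℓ = 2 → ¬ 4 ∣ 1 + P) :
    ¬ ℓ ^ 2 ∣ ∑ i ∈ Finset.range ℓ, P ^ i := by
  intro h
  rcases hℓ.eq_two_or_odd' with rfl | hodd
  · apply h2 rfl
    simpa [Finset.sum_range_succ] using h
  · have : Fact ℓ.Prime := ⟨hℓ⟩
    have hS : (∑ i ∈ Finset.range ℓ, P ^ i) * (P - 1) = P ^ ℓ - 1 := by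
      have h1P : 1 ≤ P := hP.le
      have h1Pl : 1 ≤ P ^ ℓ := Nat.one_le_pow _ _ (by omega)
      zify [h1P, h1Pl]
      exact geom_sum_mul (P : ℤ) ℓ
    have hS0 : (∑ i ∈ Finset.range ℓ, P ^ i) ≠ 0 := by
      intro h0
      rw [h0, zero_mul] at hS
      have := Nat.one_lt_pow hℓ.ne_zero hP
      omega
    have hd : ℓ ∣ P ^ ℓ - 1 := by
      rw [← hS]; exact ((dvd_pow_self ℓ two_ne_zero).trans h).mul_right _
    have h1 : (P : ZMod ℓ) = 1 := by
      have := (Nat.modEq_iff_dvd' (Nat.one_le_pow _ _ (by omega))).mpr hd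
      have := (ZMod.natCast_eq_natCast_iff _ _ _).mpr this
      simpa using this.symm
    have hd1 : ℓ ∣ P - 1 := by
      apply (Nat.modEq_iff_dvd' (by omega)).mp
      apply (ZMod.natCast_eq_natCast_iff _ _ _).mp
      simp [h1]
    have hnd : ¬ ℓ ∣ P := by
      intro hh
      have := (ZMod.natCast_eq_zero_iff P ℓ).mpr hh
      rw [h1] at this
      exact one_ne_zero this
    have hv := padicValNat.pow_sub_pow (p := ℓ) hodd hP hd1 hnd hℓ.ne_zero
    rw [one_pow, ← hS, padicValNat.mul hS0 (by omega), padicValNat_self] at hv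
    have := (padicValNat_dvd_iff_le hS0).mp h
    omega

lemma aux_exists_prime (p ℓ k : ℕ) (hp : p.Prime) (hℓ : ℓ.Prime) (hne : ℓ ≠ p) (hk : 1 ≤ k) :
    ∃ q : ℕ, q.Prime ∧ Odd q ∧ q ≠ p ∧ orderOf (p : ZMod q) = ℓ ^ (k + 1) := by
  set P := p ^ ℓ ^ k with hPdef
  have hP : 1 < P := Nat.one_lt_pow (pow_ne_zero _ hℓ.ne_zero) hp.one_lt
  set S := ∑ i ∈ Finset.range ℓ, P ^ i with hSdef
  have hsq : ¬ ℓ ^ 2 ∣ S := by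
    refine aux_not_sq_dvd ℓ P hℓ hP ?_
    rintro rfl
    have hpo : Odd p := hp.odd_of_ne_two hne.symm
    obtain ⟨j, rfl⟩ : ∃ j, k = j + 1 := ⟨k - 1, by omega⟩
    have : P = (p ^ 2 ^ j) ^ 2 := by rw [hPdef, pow_succ, pow_mul]
    obtain ⟨t, ht⟩ := hpo.pow (n := 2 ^ j)
    rw [this, ht]
    ring_nf
    omega
  have hlt : ℓ < S := by
    have : ∑ i ∈ Finset.range ℓ, 1 < S := by
      apply Finset.sum_lt_sum
      · intro i _; exact Nat.one_le_pow _ _ (by omega)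
      · exact ⟨1, by simpa using hℓ.one_lt, by simpa using hP⟩
    simpa using this
  obtain ⟨q, hq, hqS, hqℓ⟩ : ∃ q : ℕ, q.Prime ∧ q ∣ S ∧ q ≠ ℓ := by
    by_contra! hcon
    have h := Nat.eq_prime_pow_of_unique_prime_dvd (n := S) (p := ℓ) (by omega)
      (fun {d} hd hdS => hcon d hd hdS)
    apply hsq
    rw [h]
    apply pow_dvd_pow
    by_contra! hc
    have : ℓ ^ S.primeFactorsList.length ≤ ℓ ^ 1 := Nat.pow_le_pow_right hℓ.pos (by omega)
    rw [← h, pow_one] at this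
    omega
  have : Fact q.Prime := ⟨hq⟩
  have : Fact ℓ.Prime := ⟨hℓ⟩
  have hS0 : ∑ i ∈ Finset.range ℓ, (P : ZMod q) ^ i = 0 := by
    have := (ZMod.natCast_eq_zero_iff S q).mpr hqS
    simpa [hSdef] using this
  have hPl : (P : ZMod q) ^ ℓ = 1 := by
    have := geom_sum_mul (P : ZMod q) ℓ
    rw [hS0, zero_mul] at this
    exact (sub_eq_zero.mp this.symm)
  have hP1 : (P : ZMod q) ≠ 1 := by
    intro h
    rw [h] at hS0
    simp only [one_pow, Finset.sum_const, Finset.card_range, nsmul_eq_mul, mul_one] at hS0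
    exact hqℓ ((Nat.prime_dvd_prime_iff_eq hq hℓ).mp ((ZMod.natCast_eq_zero_iff _ _).mp hS0))
  refine ⟨q, hq, ?_, ?_, ?_⟩
  · apply hq.odd_of_ne_two
    rintro rfl
    rcases aux_zmod_two (P : ZMod 2) with h | h
    · rw [h, zero_pow hℓ.ne_zero] at hPl
      exact zero_ne_one hPl
    · exact hP1 h
  · rintro rfl
    rw [hPdef] at hPl
    simp [hℓ.ne_zero] at hPl
  · apply orderOf_eq_prime_pow
    · simpa [hPdef] using hP1
    · rw [pow_succ, pow_mul]
      simpa [hPdef] using hPl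

lemma aux_dvd_card (p q : ℕ) [Fact p.Prime] (E : IntermediateField (ZMod p) (AlgebraicClosure (ZMod p)))
    [Finite E] (z : AlgebraicClosure (ZMod p)) (hz : z ∈ E) (hq : q ≠ 0) (h : IsPrimitiveRoot z q) :
    q ∣ Nat.card E - 1 := by
  have : Fintype E := Fintype.ofFinite E
  have hE : IsPrimitiveRoot (⟨z, hz⟩ : E) q :=
    IsPrimitiveRoot.of_map_of_injective (f := E.val) (by simpa using h) E.val.injective
  apply hE.dvd_of_pow_eq_one
  rw [Nat.card_eq_fintype_card]
  exact FiniteField.pow_card_sub_one_eq_one _ (hE.ne_zero hq)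

lemma aux_mem (p d : ℕ) [Fact p.Prime] (E : IntermediateField (ZMod p) (AlgebraicClosure (ZMod p)))
    [Finite E] (x : AlgebraicClosure (ZMod p)) (h : IsPrimitiveRoot x d)
    (hd : d ∣ Nat.card E - 1) (hd0 : d ≠ 0) : x ∈ E := by
  obtain ⟨g, hg⟩ := IsCyclic.exists_ofOrder_eq_natCard (α := Eˣ)
  rw [Nat.card_units] at hg
  obtain ⟨c, hc⟩ := hd
  have hcard : 1 < Nat.card E := Finite.one_lt_card
  have h1 : IsPrimitiveRoot g (d * c) := by
    rw [← hc, ← hg]; exact IsPrimitiveRoot.orderOf g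
  have h2 : IsPrimitiveRoot (g ^ c) d := h1.pow (by omega) (mul_comm d c)
  have h3 : IsPrimitiveRoot ((g ^ c : Eˣ) : E) d := IsPrimitiveRoot.coe_units_iff.mpr h2
  have h4 : IsPrimitiveRoot (((g ^ c : Eˣ) : E) : AlgebraicClosure (ZMod p)) d :=
    h3.map_of_injective (f := E.val) E.val.injective
  have : NeZero d := ⟨hd0⟩
  obtain ⟨i, -, hi⟩ := h4.eq_pow_of_pow_eq_one h.pow_eq_one
  rw [← hi]
  exact pow_mem (SetLike.coe_mem _) i

lemma aux_exists_root (p q : ℕ) [Fact p.Prime] (hq : q.Prime) (hne : q ≠ p) :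
    ∃ z : AlgebraicClosure (ZMod p), IsPrimitiveRoot z q := by
  have : NeZero (q : ZMod p) := ⟨by
    rw [Ne, ZMod.natCast_eq_zero_iff]
    intro h
    exact hne ((Nat.prime_dvd_prime_iff_eq Fact.out hq).mp h).symm⟩
  exact HasEnoughRootsOfUnity.exists_primitiveRoot _ q

lemma aux_root_mem (p q : ℕ) [hp : Fact p.Prime] (hq : q.Prime) (hne : q ≠ p)
    (z : AlgebraicClosure (ZMod p)) (hz : IsPrimitiveRoot z q) : z ∈ cyclo2P (ZMod p) := by
  rcases hq.eq_two_or_odd' with rfl | hodd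
  · rw [hz.eq_neg_one_of_two_right]
    exact neg_mem (one_mem _)
  · apply IntermediateField.subset_adjoin
    refine ⟨q, Or.inr ⟨hq, hodd⟩, ?_, hz⟩
    rw [ZMod.ringChar_zmod_n]
    intro h
    exact hne ((Nat.prime_dvd_prime_iff_eq hp.out hq).mp h).symm

/-- Remark 6.2: for primes `p` and `ℓ ≠ p`, the field `𝔽_p(ζ_{2𝒫})` contains all roots of
unity of `ℓ`-power order. -/
theorem stmt15 (p ℓ : ℕ) [hp : Fact p.Prime] (hℓ : ℓ.Prime) (hne : ℓ ≠ p) :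
    ∀ (x : AlgebraicClosure (ZMod p)) (n : ℕ), IsPrimitiveRoot x (ℓ ^ n) →
      x ∈ cyclo2P (ZMod p) := by
  intro x n hx
  have hp' := hp.out
  obtain ⟨q, hq, -, hqp, hord⟩ := aux_exists_prime p ℓ (n + 1) hp' hℓ hne (by omega)
  obtain ⟨z, hz⟩ := aux_exists_root p q hq hqp
  obtain ⟨w, hw⟩ := aux_exists_root p ℓ hℓ hne
  set E : IntermediateField (ZMod p) (AlgebraicClosure (ZMod p)) :=
    IntermediateField.adjoin (ZMod p) {z, w} with hE
  have hle : E ≤ cyclo2P (ZMod p) := by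
    rw [hE, IntermediateField.adjoin_le_iff]
    rintro y (rfl | rfl)
    · exact aux_root_mem p q hq hqp _ hz
    · exact aux_root_mem p ℓ hℓ hne _ hw
  have hfd : FiniteDimensional (ZMod p) E :=
    IntermediateField.finiteDimensional_adjoin (fun y _ => Algebra.IsIntegral.isIntegral y)
  have hfin : Finite E := Module.finite_of_finite (ZMod p)
  apply hle
  have hzE : z ∈ E := IntermediateField.subset_adjoin _ _ (by simp)
  have hwE : w ∈ E := IntermediateField.subset_adjoin _ _ (by simp)
  apply aux_mem p (ℓ ^ n) E x hx _ (pow_ne_zero _ hℓ.ne_zero)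
  have h1 := aux_dvd_card p q E z hzE hq.ne_zero hz
  have h2 := aux_dvd_card p ℓ E w hwE hℓ.ne_zero hw
  have hcard : Nat.card E = p ^ Module.finrank (ZMod p) E := by
    rw [Module.natCard_eq_pow_finrank (K := ZMod p), Nat.card_zmod]
  rw [hcard] at h1 h2 ⊢
  generalize Module.finrank (ZMod p) E = m at *
  have hpos : ∀ j, 1 ≤ p ^ j := fun j => Nat.one_le_pow _ _ hp'.pos
  have hm : ℓ ^ (n + 1 + 1) ∣ m := by
    rw [← hord]
    apply orderOf_dvd_of_pow_eq_one
    have := (ZMod.natCast_eq_natCast_iff _ _ _).mpr ((Nat.modEq_iff_dvd' (hpos m)).mpr h1)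
    simpa using this.symm
  obtain ⟨c, rfl⟩ := (pow_dvd_pow ℓ (show n ≤ n + 1 + 1 by omega)).trans hm
  have : Fact ℓ.Prime := ⟨hℓ⟩
  have h3 : ((ℓ : ℕ) : ℤ) ∣ (p : ℤ) ^ c - 1 := by
    have := (ZMod.natCast_eq_natCast_iff _ _ _).mpr ((Nat.modEq_iff_dvd' (hpos _)).mpr h2)
    rw [← ZMod.intCast_zmod_eq_zero_iff_dvd]
    push_cast at this ⊢
    rw [mul_comm, pow_mul, ZMod.pow_card_pow] at this
    rw [← this, sub_self]
  have h4 := dvd_sub_pow_of_dvd_sub h3 n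
  have h5 : ((ℓ ^ n : ℕ) : ℤ) ∣ ((p ^ (ℓ ^ n * c) - 1 : ℕ) : ℤ) := by
    rw [Nat.cast_sub (hpos _)]
    push_cast
    rw [mul_comm, pow_mul]
    rw [one_pow] at h4
    exact (pow_dvd_pow _ (Nat.le_succ n)).trans h4
  exact Int.natCast_dvd_natCast.mp h5

end
end

section
/- Let char(K) ≠ 2, ζ_4 ∉ K, and let w ≥ 2 be an integer with ζ_{2^w} + ζ_{2^w}^{-1} ∈ K. Let η := ζ_{2^{w+1}}·√(ζ_{2^w} + ζ_{2^w}^{-1} + 2), where √ denotes a square root in K̄. Then η² = (1 + ζ_{2^w})², hence η ∈ {±(1 + ζ_{2^w})}, and K(η) = K(ζ_4). Moreover, ζ_{2^{w+1}}^{-1}·√(ζ_{2^w} + ζ_{2^w}^{-1} + 2) lies in the subgroup ⟨η, ζ_{2^w}, K^×⟩ of K̄^×. -/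
noncomputable section

open IntermediateField

/-- Remark 6.3: let `char K ≠ 2`, `ζ₄ ∉ K`, `w ≥ 2` with `ζ_{2^w} + ζ_{2^w}⁻¹ ∈ K`, where
`ζ_{2^w} = ζ_{2^{w+1}}²`. Let `η := ζ_{2^{w+1}} ⬝ √(ζ_{2^w} + ζ_{2^w}⁻¹ + 2)`. Then
`η² = (1 + ζ_{2^w})²`, hence `η ∈ {±(1 + ζ_{2^w})}`, and `K(η) = K(ζ₄)`; moreover
`ζ_{2^{w+1}}⁻¹ ⬝ √(ζ_{2^w} + ζ_{2^w}⁻¹ + 2) ∈ ⟨η, ζ_{2^w}, K^×⟩`. -/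
theorem stmt16 (K : Type*) [Field K] (hchar : ringChar K ≠ 2)
    (h4 : ¬ ∃ z : K, IsPrimitiveRoot z 4)
    (w : ℕ) (hw : 2 ≤ w) (ζ : AlgebraicClosure K) (hζ : IsPrimitiveRoot ζ (2 ^ (w + 1)))
    (hK : ∃ y : K, algebraMap K (AlgebraicClosure K) y = ζ ^ 2 + (ζ ^ 2)⁻¹)
    (r : AlgebraicClosure K) (hr : r ^ 2 = ζ ^ 2 + (ζ ^ 2)⁻¹ + 2) :
    (ζ * r) ^ 2 = (1 + ζ ^ 2) ^ 2 ∧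
    (ζ * r = 1 + ζ ^ 2 ∨ ζ * r = -(1 + ζ ^ 2)) ∧
    IntermediateField.adjoin K {ζ * r} = IntermediateField.adjoin K (primRoots K 4) ∧
    ∃ u ∈ Subgroup.closure {v : (AlgebraicClosure K)ˣ |
          (v : AlgebraicClosure K) = ζ * r ∨ (v : AlgebraicClosure K) = ζ ^ 2} ⊔ baseUnits K,
      (u : AlgebraicClosure K) = ζ⁻¹ * r := by
  have hζ0 : ζ ≠ 0 := hζ.ne_zero (by positivity)
  have hsq : (ζ * r) ^ 2 = (1 + ζ ^ 2) ^ 2 := by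
    rw [mul_pow, hr]; field_simp; ring
  have hor : ζ * r = 1 + ζ ^ 2 ∨ ζ * r = -(1 + ζ ^ 2) := sq_eq_sq_iff_eq_or_eq_neg.mp hsq
  obtain ⟨y, hy⟩ := hK
  have hZ2 : (ζ ^ 2) ^ 2 = algebraMap K (AlgebraicClosure K) y * ζ ^ 2 - 1 := by
    rw [hy]; field_simp; ring
  have hpow : ∀ n : ℕ, ∃ a b : K, (ζ ^ 2) ^ n =
      algebraMap K (AlgebraicClosure K) a + algebraMap K (AlgebraicClosure K) b * ζ ^ 2 := by
    intro n
    induction n with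
    | zero => exact ⟨1, 0, by simp⟩
    | succ n ih =>
      obtain ⟨a, b, h⟩ := ih
      refine ⟨-b, a + b * y, ?_⟩
      rw [pow_succ, h]
      simp only [map_neg, map_add, map_mul]
      linear_combination (algebraMap K (AlgebraicClosure K) b) * hZ2
  have hi : IsPrimitiveRoot ((ζ ^ 2) ^ (2 ^ (w - 2))) 4 := by
    rw [← pow_mul]
    refine hζ.pow (by positivity) ?_
    obtain ⟨k, rfl⟩ := Nat.exists_eq_add_of_le hw
    simp only [Nat.add_sub_cancel_left]
    ring
  have hZη : IntermediateField.adjoin K {ζ * r} = IntermediateField.adjoin K {ζ ^ 2} := by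
    apply le_antisymm
    · rw [IntermediateField.adjoin_simple_le_iff]
      have hm := IntermediateField.mem_adjoin_simple_self K (ζ ^ 2)
      rcases hor with h | h <;> rw [h]
      · exact add_mem (one_mem _) hm
      · exact neg_mem (add_mem (one_mem _) hm)
    · rw [IntermediateField.adjoin_simple_le_iff]
      have hm := IntermediateField.mem_adjoin_simple_self K (ζ * r)
      rcases hor with h | h
      · have e : ζ ^ 2 = ζ * r - 1 := by rw [h]; ring
        rw [e]; exact sub_mem hm (one_mem _)
      · have e : ζ ^ 2 = -(ζ * r) - 1 := by rw [h]; ring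
        rw [e]; exact sub_mem (neg_mem hm) (one_mem _)
  refine ⟨hsq, hor, ?_, ?_⟩
  · rw [hZη]
    apply le_antisymm
    · rw [IntermediateField.adjoin_simple_le_iff]
      obtain ⟨a, b, hab⟩ := hpow (2 ^ (w - 2))
      have hmem : (ζ ^ 2) ^ (2 ^ (w - 2)) ∈ IntermediateField.adjoin K (primRoots K 4) :=
        IntermediateField.subset_adjoin K _ hi
      have hb : b ≠ 0 := by
        rintro rfl
        apply h4
        refine ⟨a, ?_⟩
        rw [hab] at hi
        simp only [map_zero, zero_mul, add_zero] at hi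
        exact IsPrimitiveRoot.of_map_of_injective hi (algebraMap K (AlgebraicClosure K)).injective
      have hb' : algebraMap K (AlgebraicClosure K) b ≠ 0 := by simpa using hb
      have e : ζ ^ 2 = ((ζ ^ 2) ^ (2 ^ (w - 2)) - algebraMap K (AlgebraicClosure K) a) /
          algebraMap K (AlgebraicClosure K) b := by
        rw [hab]; field_simp; ring
      rw [e]
      exact div_mem (sub_mem hmem (IntermediateField.algebraMap_mem _ _))
        (IntermediateField.algebraMap_mem _ _)
    · rw [IntermediateField.adjoin_le_iff]
      intro x hx
      have hx' : IsPrimitiveRoot x 4 := hx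
      obtain ⟨j, -, hj⟩ := hi.eq_pow_of_pow_eq_one hx'.pow_eq_one
      rw [← hj]
      exact pow_mem (pow_mem (IntermediateField.mem_adjoin_simple_self K (ζ ^ 2)) _) _
  · have hne : 1 + ζ ^ 2 ≠ 0 := by
      intro h
      have h1 : ζ ^ 4 = 1 := by linear_combination (ζ ^ 2 - 1) * h
      have h2 := Nat.le_of_dvd (by norm_num) (hζ.dvd_of_pow_eq_one 4 h1)
      have h3 : 2 ^ 3 ≤ 2 ^ (w + 1) := Nat.pow_le_pow_right (by norm_num) (by omega)
      omega
    have hη0 : ζ * r ≠ 0 := by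
      rcases hor with h | h <;> rw [h]
      · exact hne
      · exact neg_ne_zero.mpr hne
    have hZ0 : ζ ^ 2 ≠ 0 := pow_ne_zero _ hζ0
    refine ⟨Units.mk0 _ hη0 * (Units.mk0 _ hZ0)⁻¹, ?_, ?_⟩
    · apply Subgroup.mem_sup_left
      exact mul_mem (Subgroup.subset_closure (Or.inl rfl))
        (inv_mem (Subgroup.subset_closure (Or.inr rfl)))
    · simp only [Units.val_mul, Units.val_inv_eq_inv_val, Units.val_mk0]
      field_simp
end
end

section
/- Let K be a number field, ℓ a prime number that does not ramify in K, and W a finite group of roots of unity (in a fixed algebraic closure of K) of order coprime to ℓ. If a root of unity ζ of order a power of ℓ lies in K(W), then ζ ∈ K. -/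
noncomputable section

open IntermediateField

open Polynomial in
theorem aux_discr (K L : Type*) [Field K] [NumberField K] [Field L] [NumberField L] [Algebra K L]
    (ℓ : ℕ) (hℓ : ℓ.Prime) (hK : ¬ ((ℓ : ℤ) ∣ NumberField.discr K)) (m : ℕ) (hm : 0 < m)
    (hcop : Nat.Coprime m ℓ) (w : L) (hw : w ^ m = 1) (htop : Algebra.adjoin K {w} = ⊤) :
    ¬ ((ℓ : ℤ) ∣ NumberField.discr L) := by
  intro hdvd
  rw [← Int.dvd_natAbs, Int.natCast_dvd_natCast,
    NumberField.natAbs_discr_eq_absNorm_differentIdeal_mul_natAbs_discr_pow K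
      (NumberField.RingOfIntegers K) L (NumberField.RingOfIntegers L), hℓ.dvd_mul] at hdvd
  rcases hdvd with h | h
  · obtain ⟨P, hP, hP1, hP2⟩ := Ideal.exists_isMaximal_dvd_of_dvd_absNorm' hℓ _ h
    have hwi : IsIntegral ℤ w := IsIntegral.of_pow hm (by rw [hw]; exact isIntegral_one)
    let x : NumberField.RingOfIntegers L := ⟨w, hwi⟩
    have hx : x ^ m = 1 := by
      apply NumberField.RingOfIntegers.coe_injective
      rw [map_pow, map_one]
      exact hw
    have hmem := aeval_derivative_mem_differentIdeal (NumberField.RingOfIntegers K) K L x htop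
    have hxi : IsIntegral (NumberField.RingOfIntegers K) x := Algebra.IsIntegral.isIntegral x
    have hdv : minpoly (NumberField.RingOfIntegers K) x ∣ X ^ m - 1 := by
      apply minpoly.isIntegrallyClosed_dvd hxi
      simp [hx]
    obtain ⟨g, hg⟩ := hdv
    have hd := congrArg (fun p => aeval x (derivative p)) hg
    simp only [derivative_mul, derivative_sub, derivative_X_pow, derivative_one, map_add, map_mul,
      minpoly.aeval, zero_mul, add_zero, sub_zero, map_pow, aeval_X] at hd
    have hmP : ((m : NumberField.RingOfIntegers L) * x ^ (m - 1)) ∈ P := by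
      have := Ideal.mul_mem_right (aeval x g) P (Ideal.dvd_iff_le.mp hP2 hmem)
      rw [← hd] at this
      simpa using this
    have hmP2 : (m : NumberField.RingOfIntegers L) ∈ P := by
      have := Ideal.mul_mem_right x P hmP
      rwa [mul_assoc, pow_sub_one_mul hm.ne', hx, mul_one] at this
    have hmP3 : (m : ℤ) ∈ P.under ℤ := by
      rw [Ideal.mem_comap]; simpa using hmP2
    rw [hP1, Ideal.mem_span_singleton, Int.natCast_dvd_natCast] at hmP3
    exact hℓ.one_lt.ne' (Nat.Coprime.eq_one_of_dvd hcop.symm hmP3)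
  · have := hℓ.dvd_of_dvd_pow h
    exact hK (by rwa [← Int.dvd_natAbs, Int.natCast_dvd_natCast])

theorem aux_root (L : Type*) [Field L] [NumberField L] (ℓ : ℕ) (hℓ : ℓ.Prime)
    (hL : ¬ ((ℓ : ℤ) ∣ NumberField.discr L)) (k : ℕ) (ζ : L) (hζ : IsPrimitiveRoot ζ (ℓ ^ k)) :
    ζ = 1 ∨ ζ = -1 := by
  have : Fact ℓ.Prime := ⟨hℓ⟩
  rcases k with _ | k
  · left; simpa using hζ
  · by_cases h2 : ℓ ^ (k + 1) = 2
    · right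
      rw [h2] at hζ
      exact hζ.eq_neg_one_of_two_right
    · exfalso
      have : IsCyclotomicExtension {ℓ ^ (k + 1)} ℚ (IntermediateField.adjoin ℚ {ζ}) :=
        hζ.intermediateField_adjoin_isCyclotomicExtension ℚ
      have hd := IsCyclotomicExtension.Rat.discr_prime_pow_succ ℓ k (IntermediateField.adjoin ℚ {ζ})
      have hdd := NumberField.discr_dvd_discr (IntermediateField.adjoin ℚ {ζ}) L
      apply hL
      refine dvd_trans ?_ hdd
      rw [hd]
      apply Dvd.dvd.mul_left
      apply dvd_pow_self
      apply Nat.mul_ne_zero (pow_ne_zero _ hℓ.ne_zero)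
      have := hℓ.two_le
      rcases this.eq_or_lt with h | h
      · subst h
        rcases k with _ | k
        · simp at h2
        · simp
      · have : 2 * 1 ≤ (ℓ - 1) * (k + 1) := Nat.mul_le_mul (by omega) (by omega)
        omega

/-- Remark 4.7 (number field case): let `K` be a number field, `ℓ` a prime not dividing the
discriminant of `K` (i.e. unramified in `K`), and `W` a finite group of roots of unity of
order coprime to `ℓ`. Any root of unity of `ℓ`-power order lying in `K(W)` lies in `K`. -/
theorem stmt17 (K : Type*) [Field K] [NumberField K] (ℓ : ℕ) (hℓ : ℓ.Prime)
    (hunram : ¬ ((ℓ : ℤ) ∣ NumberField.discr K))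
    (W : Subgroup (AlgebraicClosure K)ˣ) (hWfin : (W : Set (AlgebraicClosure K)ˣ).Finite)
    (hWroot : ∀ x ∈ W, ∃ n : ℕ, 0 < n ∧ (x : AlgebraicClosure K) ^ n = 1)
    (hWcop : Nat.Coprime (Nat.card W) ℓ) :
    ∀ (ζ : AlgebraicClosure K) (k : ℕ), IsPrimitiveRoot ζ (ℓ ^ k) →
      ζ ∈ IntermediateField.adjoin K (Units.val '' (W : Set (AlgebraicClosure K)ˣ)) →
      ∃ y : K, algebraMap K (AlgebraicClosure K) y = ζ := by
  intro ζ k hζ hmem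
  have : Finite W := hWfin
  obtain ⟨g, hg⟩ := IsCyclic.exists_generator (α := W)
  have hm : 0 < Nat.card W := Nat.card_pos
  set w : AlgebraicClosure K := ((g : (AlgebraicClosure K)ˣ) : AlgebraicClosure K) with hwdef
  have hw : w ^ Nat.card W = 1 := by
    have : g ^ Nat.card W = 1 := pow_card_eq_one'
    have := congrArg (fun t : W => ((t : (AlgebraicClosure K)ˣ) : AlgebraicClosure K)) this
    simpa only [Subgroup.coe_pow, Units.val_pow_eq_pow_val, Subgroup.coe_one, Units.val_one] using this
  have hle : IntermediateField.adjoin K (Units.val '' (W : Set (AlgebraicClosure K)ˣ)) ≤ K⟮w⟯ := by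
    rw [IntermediateField.adjoin_le_iff]
    rintro _ ⟨u, hu, rfl⟩
    obtain ⟨n, hn⟩ := Subgroup.mem_zpowers_iff.mp (hg ⟨u, hu⟩)
    have hn' := congrArg (fun t : W => ((t : (AlgebraicClosure K)ˣ) : AlgebraicClosure K)) hn
    simp only [Subgroup.coe_zpow, Units.val_zpow_eq_zpow_val] at hn'
    rw [← hn']
    exact zpow_mem (IntermediateField.mem_adjoin_simple_self K w) n
  have hz := hle hmem
  have hwint : IsIntegral K w := Algebra.IsIntegral.isIntegral w
  have : FiniteDimensional K K⟮w⟯ := IntermediateField.adjoin.finiteDimensional hwint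
  have : NumberField K⟮w⟯ := NumberField.of_module_finite K K⟮w⟯
  have htop : Algebra.adjoin K {IntermediateField.AdjoinSimple.gen K w} = ⊤ := by
    have := (IntermediateField.adjoin.powerBasis hwint).adjoin_gen_eq_top
    rwa [IntermediateField.adjoin.powerBasis_gen] at this
  have hL := aux_discr K K⟮w⟯ ℓ hℓ hunram (Nat.card W) hm hWcop
    (IntermediateField.AdjoinSimple.gen K w) (Subtype.ext (by simpa using hw)) htop
  have hζ' : IsPrimitiveRoot (⟨ζ, hz⟩ : K⟮w⟯) (ℓ ^ k) :=
    IsPrimitiveRoot.of_map_of_injective (f := algebraMap K⟮w⟯ (AlgebraicClosure K)) hζ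
      (algebraMap K⟮w⟯ (AlgebraicClosure K)).injective
  rcases aux_root K⟮w⟯ ℓ hℓ hL k _ hζ' with h | h
  · refine ⟨1, ?_⟩
    have := congrArg Subtype.val h
    simpa using this.symm
  · refine ⟨-1, ?_⟩
    have := congrArg Subtype.val h
    simpa using this.symm
end
end
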